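/- arXiv:1505.05263 — 2 statements merged into one kernel-verified Lean document; each statement's English description precedes it below -/
import Mathlib

section
/- For every ε > 0 there exists an affinely independent family v : Fin 4 → EuclideanSpace ℝ (Fin 3) (a nondegenerate tetrahedron T = conv(range v)) such that the solid angle of T at one vertex is greater than 2π − ε while the solid angles of T at each of the other three vertices are less than ε. (Hence the average of the four solid angles can be made arbitrarily close to π/2, which exceeds the solid angle of the regular tetrahedron, so an averaging argument cannot prove the minimal-solid-angle bound.) -/
/-!
The tetrahedron is very flat: an apex at depth `h` below a fixed horizontal triangle that contains
the unit disc. As `h → 0` the cone at the apex fills up the upper half-space, while the cones at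
the other three vertices collapse onto the horizontal plane.

For a base vertex this is a linear-programming remark: on the tetrahedron, the depth below the
base plane is at most `h` times a horizontal linear functional vanishing at that vertex, so
every unit direction `u` from the vertex has `|u 2| ≤ 2 * h` (`abs_le_of_mem_base`). The
corresponding equatorial band is the image of a thin rectangle under the spherical coordinates
`sph`, which are `2`-Lipschitz, so its Hausdorff measure is small (`band_measure`). For the apex,
every direction of latitude at least `δ` points into the tetrahedron once `h ≤ sin δ`
(`sph_mem_apex`).

It remains to bound the measure of the cap of latitude at least `δ` from below (`cap_measure`).
The cap is cut, up to a small disc at the pole, into spherical coordinate cells of mesh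
comparable to `δ`. The identity
`dist² = 4 sin² (Δφ / 2) + 4 cos φ cos φ' sin² (Δθ / 2)`
for the chordal distance (`dist_sph_sq`) shows that on each cell `sph` does not contract the sup
distance of the rescaled parameters `(κ cos φ₁ θ, κ φ)`, where `φ₁` is the upper latitude and
`κ < 1` is close to `1`. On `ℝ × ℝ` with its sup metric `μH[2]` is Lebesgue measure, so each cell
has measure at least `κ² cos φ₁ Δθ Δφ` (`cell_measure`). Bounding `cos φ₁ Δφ` below by an increment
of `sin` makes the sum over the cells telescope to a quantity that tends to `2π`.

The measure `μH[2]` of Mathlib is not rescaled so as to agree with the area of Euclidean planes: its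
normalization makes it at least as large as the area, and this argument needs only this inequality
for the lower bound and a Lipschitz estimate for the upper bound.
-/

open MeasureTheory
open scoped ENNReal

/-- The solid angle of a set `P ⊆ ℝ³` at a point `v`. -/
noncomputable def solidAngle3 (P : Set (EuclideanSpace ℝ (Fin 3)))
    (v : EuclideanSpace ℝ (Fin 3)) : ℝ≥0∞ :=
  μH[2] {u : EuclideanSpace ℝ (Fin 3) | ‖u‖ = 1 ∧ ∃ t > (0 : ℝ), v + t • u ∈ P}

namespace ThinTetrahedron

/-! ### Spherical coordinates -/

/-- The point of the unit sphere with longitude `p.1` and latitude `p.2`. -/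
noncomputable def sph (p : ℝ × ℝ) : EuclideanSpace ℝ (Fin 3) :=
  !₂[Real.cos p.2 * Real.cos p.1, Real.cos p.2 * Real.sin p.1, Real.sin p.2]

lemma continuous_sph : Continuous sph := by
  unfold sph
  fun_prop

lemma norm_sph (p : ℝ × ℝ) : ‖sph p‖ = 1 := by
  rw [← sq_eq_sq₀ (norm_nonneg _) zero_le_one, EuclideanSpace.norm_sq_eq]
  simp only [sph, Real.norm_eq_abs, sq_abs, Fin.sum_univ_three, PiLp.toLp_apply,
    Matrix.cons_val_zero, Matrix.cons_val_one, Matrix.cons_val]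
  nlinarith [Real.sin_sq_add_cos_sq p.1, Real.sin_sq_add_cos_sq p.2]

/-- The chordal distance in spherical coordinates. -/
lemma dist_sph_sq (p q : ℝ × ℝ) :
    dist (sph p) (sph q) ^ 2 = 4 * Real.sin ((p.2 - q.2) / 2) ^ 2 +
      4 * (Real.cos p.2 * Real.cos q.2) * Real.sin ((p.1 - q.1) / 2) ^ 2 := by
  rw [EuclideanSpace.dist_sq_eq]
  simp only [sph, Real.dist_eq, sq_abs, Fin.sum_univ_three, PiLp.toLp_apply,
    Matrix.cons_val_zero, Matrix.cons_val_one, Matrix.cons_val]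
  have h1 := Real.sin_sq_eq_half_sub ((p.1 - q.1) / 2)
  have h2 := Real.sin_sq_eq_half_sub ((p.2 - q.2) / 2)
  rw [mul_div_cancel₀ _ (two_ne_zero), Real.cos_sub] at h1 h2
  rw [h1, h2]
  linear_combination (Real.cos p.2 ^ 2) * Real.sin_sq_add_cos_sq p.1 +
    (Real.cos q.2 ^ 2) * Real.sin_sq_add_cos_sq q.1 + Real.sin_sq_add_cos_sq p.2 +
    Real.sin_sq_add_cos_sq q.2

lemma lipschitzWith_sph : LipschitzWith 2 sph := by
  refine LipschitzWith.of_dist_le_mul fun p q => ?_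
  have h := dist_sph_sq p q
  have h1 : |p.1 - q.1| ≤ dist p q := le_max_left _ _
  have h2 : |p.2 - q.2| ≤ dist p q := le_max_right _ _
  have s1 : Real.sin ((p.1 - q.1) / 2) ^ 2 ≤ ((p.1 - q.1) / 2) ^ 2 :=
    sq_le_sq.2 Real.abs_sin_le_abs
  have s2 : Real.sin ((p.2 - q.2) / 2) ^ 2 ≤ ((p.2 - q.2) / 2) ^ 2 :=
    sq_le_sq.2 Real.abs_sin_le_abs
  have hc : Real.cos p.2 * Real.cos q.2 ≤ 1 := by
    nlinarith [Real.cos_sq_le_one p.2, Real.cos_sq_le_one q.2,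
      sq_nonneg (Real.cos p.2 - Real.cos q.2)]
  have q1 := sq_le_sq' (by linarith [abs_nonneg (p.1 - q.1)]) h1
  have q2 := sq_le_sq' (by linarith [abs_nonneg (p.2 - q.2)]) h2
  rw [sq_abs] at q1 q2
  have hm := mul_le_mul_of_nonneg_right hc (sq_nonneg (Real.sin ((p.1 - q.1) / 2)))
  refine abs_le_of_sq_le_sq' ?_ (by positivity) |>.2
  rw [NNReal.coe_ofNat]
  nlinarith

/-- Since `x cos x ≤ sin x`, the factor `cos β` bounds `sin x / x` from below on `[-β, β]`. -/
lemma mul_abs_le_abs_sin {β x : ℝ} (hβ : β < Real.pi / 2) (hx : |x| ≤ β) :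
    Real.cos β * |x| ≤ |Real.sin x| := by
  have hp := Real.pi_pos
  rw [Real.abs_sin_eq_sin_abs_of_abs_le_pi (by linarith)]
  have h0 := abs_nonneg x
  have hc : 0 < Real.cos |x| := Real.cos_pos_of_mem_Ioo ⟨by linarith, by linarith⟩
  have h1 := Real.le_tan h0 (by linarith)
  rw [Real.tan_eq_sin_div_cos, le_div_iff₀ hc] at h1
  have h2 : Real.cos β ≤ Real.cos |x| :=
    Real.cos_le_cos_of_nonneg_of_le_pi h0 (by linarith) hx
  nlinarith

/-! ### Measure of spherical cells, caps and bands -/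

/-- Lower bound for a coordinate cell in the northern hemisphere whose sides are at most `2 * β`. Up to
the factor `cos β ^ 2`, it is the longitude increment times the latitude increment times the cosine
of the highest latitude. -/
lemma cell_measure {β t₀ t₁ f₀ f₁ : ℝ} (hβ : β < Real.pi / 2) (ht : t₁ - t₀ ≤ 2 * β)
    (hf : f₁ - f₀ ≤ 2 * β) (h0 : 0 ≤ f₀) (h01 : f₀ < f₁) (t01 : t₀ < t₁) (h1 : f₁ < Real.pi / 2) :
    ENNReal.ofReal (Real.cos β ^ 2 * (t₁ - t₀) * (Real.cos f₁ * (f₁ - f₀))) ≤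
      μH[2] (sph '' (Set.Ico t₀ t₁ ×ˢ Set.Ico f₀ f₁)) := by
  have hp := Real.pi_pos
  set C := Set.Ico t₀ t₁ ×ˢ Set.Ico f₀ f₁ with hC
  have hκ : 0 < Real.cos β := Real.cos_pos_of_mem_Ioo ⟨by linarith, by linarith⟩
  have hc1 : 0 < Real.cos f₁ := Real.cos_pos_of_mem_Ioo ⟨by linarith, by linarith⟩
  -- A rescaling of the parameters for which `S ∘ sph⁻¹` is `1`-Lipschitz on the cell.
  set S : ℝ × ℝ → ℝ × ℝ :=
    Prod.map (fun x => Real.cos β * Real.cos f₁ * x) (fun x => Real.cos β * x) with hS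
  have key : ∀ p ∈ C, ∀ q ∈ C, dist (S p) (S q) ≤ dist (sph p) (sph q) := by
    rintro p ⟨⟨hp1, hp2⟩, hp3, hp4⟩ q ⟨⟨hq1, hq2⟩, hq3, hq4⟩
    have a1 : |(p.1 - q.1) / 2| ≤ β := by rw [abs_le]; constructor <;> linarith
    have a2 : |(p.2 - q.2) / 2| ≤ β := by rw [abs_le]; constructor <;> linarith
    have b1 := mul_abs_le_abs_sin hβ a1
    have b2 := mul_abs_le_abs_sin hβ a2
    have cp : Real.cos f₁ ≤ Real.cos p.2 :=
      Real.cos_le_cos_of_nonneg_of_le_pi (by linarith) (by linarith) hp4.le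
    have cq : Real.cos f₁ ≤ Real.cos q.2 :=
      Real.cos_le_cos_of_nonneg_of_le_pi (by linarith) (by linarith) hq4.le
    have b1' := pow_le_pow_left₀ (by positivity) b1 2
    have b2' := pow_le_pow_left₀ (by positivity) b2 2
    rw [mul_pow, sq_abs, sq_abs] at b1' b2'
    have hcc : Real.cos f₁ ^ 2 ≤ Real.cos p.2 * Real.cos q.2 := by nlinarith
    have e := dist_sph_sq p q
    rw [Prod.dist_eq]
    refine max_le ?_ ?_
    · refine abs_le_of_sq_le_sq' ?_ dist_nonneg |>.2
      have := mul_le_mul hcc b1' (by positivity) (by nlinarith)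
      rw [e, Real.dist_eq, sq_abs]
      simp only [hS, Prod.map_fst]
      nlinarith [sq_nonneg (Real.sin ((p.2 - q.2) / 2))]
    · refine abs_le_of_sq_le_sq' ?_ dist_nonneg |>.2
      have : 0 ≤ Real.cos p.2 * Real.cos q.2 * Real.sin ((p.1 - q.1) / 2) ^ 2 :=
        mul_nonneg (by nlinarith) (sq_nonneg _)
      rw [e, Real.dist_eq, sq_abs]
      simp only [hS, Prod.map_snd]
      nlinarith
  have hinj : Set.InjOn sph C := by
    intro p hp q hq hpq
    have := key p hp q hq
    rw [hpq, dist_self] at this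
    have hz := dist_le_zero.1 this
    have z1 := congrArg Prod.fst hz
    have z2 := congrArg Prod.snd hz
    simp only [hS, Prod.map_fst, Prod.map_snd] at z1 z2
    exact Prod.ext (mul_left_cancel₀ (by positivity) z1) (mul_left_cancel₀ hκ.ne' z2)
  set g := S ∘ Function.invFunOn sph C with hg
  have hgs : ∀ p ∈ C, g (sph p) = S p := fun p hp => by
    simp only [hg, Function.comp, hinj.leftInvOn_invFunOn hp]
  have hlip : LipschitzOnWith 1 g (sph '' C) := by
    refine LipschitzOnWith.of_dist_le_mul ?_
    rintro _ ⟨p, hp, rfl⟩ _ ⟨q, hq, rfl⟩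
    rw [hgs p hp, hgs q hq, NNReal.coe_one, one_mul]
    exact key p hp q hq
  have h := hlip.hausdorffMeasure_image_le (d := 2) zero_le_two
  have himg : g '' (sph '' C) = S '' C := by
    rw [Set.image_image]
    exact Set.image_congr hgs
  rw [himg, ENNReal.coe_one, ENNReal.one_rpow, one_mul] at h
  refine le_trans (le_of_eq ?_) h
  rw [hausdorffMeasure_prod_real, hS, hC, Set.prodMap_image_prod,
    Set.image_mul_left_Ico (by positivity), Set.image_mul_left_Ico hκ,
    Measure.volume_eq_prod, Measure.prod_prod, Real.volume_Ico, Real.volume_Ico,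
    ← ENNReal.ofReal_mul (by nlinarith [mul_pos hκ hc1])]
  congr 1
  ring

lemma injOn_sph : Set.InjOn sph (Set.Ico 0 (2 * Real.pi) ×ˢ Set.Ioo 0 (Real.pi / 2)) := by
  rintro p ⟨⟨hp1, hp2⟩, hp3, hp4⟩ q ⟨⟨hq1, hq2⟩, hq3, hq4⟩ h
  have hpi := Real.pi_pos
  have e := dist_sph_sq p q
  rw [h, dist_self] at e
  have cp : 0 < Real.cos p.2 := Real.cos_pos_of_mem_Ioo ⟨by linarith, by linarith⟩
  have cq : 0 < Real.cos q.2 := Real.cos_pos_of_mem_Ioo ⟨by linarith, by linarith⟩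
  have cc := mul_pos cp cq
  have z2 : Real.sin ((p.2 - q.2) / 2) = 0 := by
    have := mul_nonneg cc.le (sq_nonneg (Real.sin ((p.1 - q.1) / 2)))
    have := sq_nonneg (Real.sin ((p.2 - q.2) / 2))
    exact pow_eq_zero_iff two_ne_zero |>.1 (by nlinarith)
  have z1 : Real.sin ((p.1 - q.1) / 2) = 0 := by
    rw [z2] at e
    have : Real.cos p.2 * Real.cos q.2 * Real.sin ((p.1 - q.1) / 2) ^ 2 = 0 := by linarith
    exact pow_eq_zero_iff two_ne_zero |>.1 ((mul_eq_zero.1 this).resolve_left cc.ne')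
  have y1 := (Real.sin_eq_zero_iff_of_lt_of_lt (by linarith) (by linarith)).1 z1
  have y2 := (Real.sin_eq_zero_iff_of_lt_of_lt (by linarith) (by linarith)).1 z2
  exact Prod.ext (by linarith) (by linarith)

/-- The part of the northern hemisphere above latitude `π / (2 * (n + 3))` has measure at least a
quantity that tends to `2π`. Restricting the latitude to values below `π / 2` keeps `sph` injective. -/
lemma cap_measure (n : ℕ) :
    ENNReal.ofReal (Real.cos (Real.pi / (n + 3)) ^ 2 * (2 * Real.pi) *
        (1 - Real.sin (Real.pi / (n + 3)))) ≤
      μH[2] (sph '' (Set.Ico 0 (2 * Real.pi) ×ˢ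
        Set.Ico (Real.pi / (2 * (n + 3))) (Real.pi / 2))) := by
  have hpi := Real.pi_pos
  set δ := Real.pi / (2 * (n + 3)) with hδ
  have hN : (0 : ℝ) < n + 3 := by positivity
  have hδ0 : 0 < δ := by positivity
  have hδN : (n + 3) * δ = Real.pi / 2 := by rw [hδ]; field_simp
  have hβ : Real.pi / (n + 3) = 2 * δ := by rw [hδ]; field_simp
  rw [hβ]
  have hn0 : (0 : ℝ) ≤ n := n.cast_nonneg
  -- The top row of latitudes is left out: `cos` vanishes at its upper end, so `cell_measure` does
  -- not apply to it, and its contribution to the sum is not needed.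
  set cell : ℕ × ℕ → Set (ℝ × ℝ) := fun k =>
    Set.Ico (k.1 * (4 * δ)) ((k.1 + 1) * (4 * δ)) ×ˢ Set.Ico ((k.2 + 1) * δ) ((k.2 + 2) * δ)
    with hcell
  set I := Finset.range (n + 3) ×ˢ Finset.range (n + 1) with hI
  have hsub : ∀ k ∈ I, cell k ⊆ Set.Ico 0 (2 * Real.pi) ×ˢ Set.Ico δ (Real.pi / 2) := by
    intro k hk
    simp only [hI, Finset.mem_product, Finset.mem_range] at hk
    have k1 : (k.1 : ℝ) + 1 ≤ n + 3 := by exact_mod_cast hk.1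
    have k2 : (k.2 : ℝ) + 1 ≤ n + 1 := by exact_mod_cast hk.2
    refine Set.prod_mono (Set.Ico_subset_Ico (by positivity) (by nlinarith))
      (Set.Ico_subset_Ico ?_ (by nlinarith))
    have : (0 : ℝ) ≤ k.2 := k.2.cast_nonneg
    nlinarith
  have hsub' : Set.Ico 0 (2 * Real.pi) ×ˢ Set.Ico δ (Real.pi / 2) ⊆
      Set.Ico 0 (2 * Real.pi) ×ˢ Set.Ioo 0 (Real.pi / 2) :=
    Set.prod_mono le_rfl fun x hx => ⟨hδ0.trans_le hx.1, hx.2⟩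
  have hdisj : (I : Set (ℕ × ℕ)).PairwiseDisjoint fun k => sph '' cell k := by
    intro k hk l hl hkl
    rw [Function.onFun, Set.disjoint_left]
    rintro _ ⟨p, hp, rfl⟩ ⟨q, hq, hqp⟩
    obtain rfl : q = p := injOn_sph (hsub' (hsub l hl hq)) (hsub' (hsub k hk hp)) hqp
    obtain ⟨⟨a1, a2⟩, a3, a4⟩ := hp
    obtain ⟨⟨b1, b2⟩, b3, b4⟩ := hq
    refine hkl (Prod.ext ?_ ?_)
    · have u1 : (k.1 : ℝ) < l.1 + 1 := by
        refine lt_of_mul_lt_mul_right (lt_of_le_of_lt a1 b2) (by positivity)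
      have u2 : (l.1 : ℝ) < k.1 + 1 := by
        refine lt_of_mul_lt_mul_right (lt_of_le_of_lt b1 a2) (by positivity)
      have u1' : k.1 < l.1 + 1 := by exact_mod_cast u1
      have u2' : l.1 < k.1 + 1 := by exact_mod_cast u2
      omega
    · have u1 : (k.2 : ℝ) + 1 < l.2 + 2 := by
        refine lt_of_mul_lt_mul_right (lt_of_le_of_lt a3 b4) hδ0.le
      have u2 : (l.2 : ℝ) + 1 < k.2 + 2 := by
        refine lt_of_mul_lt_mul_right (lt_of_le_of_lt b3 a4) hδ0.le
      have u1' : k.2 + 1 < l.2 + 2 := by exact_mod_cast u1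
      have u2' : l.2 + 1 < k.2 + 2 := by exact_mod_cast u2
      omega
  have hmeas : ∀ k ∈ I, MeasurableSet (sph '' cell k) := fun k hk =>
    (measurableSet_Ico.prod measurableSet_Ico).image_of_continuousOn_injOn
      continuous_sph.continuousOn (injOn_sph.mono ((hsub k hk).trans hsub'))
  have hlow : ∀ k ∈ I, ENNReal.ofReal (Real.cos (2 * δ) ^ 2 * (4 * δ) *
      (Real.sin ((k.2 + 3) * δ) - Real.sin ((k.2 + 2) * δ))) ≤ μH[2] (sph '' cell k) := by
    intro k hk
    simp only [hI, Finset.mem_product, Finset.mem_range] at hk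
    have k2 : (k.2 : ℝ) + 1 ≤ n + 1 := by exact_mod_cast hk.2
    have k0 : (0 : ℝ) ≤ k.2 := k.2.cast_nonneg
    refine le_trans (ENNReal.ofReal_le_ofReal ?_)
      (cell_measure (β := 2 * δ) (by nlinarith) (by linarith) (by linarith) (by positivity)
        (by linarith) (by linarith) (by nlinarith))
    have e1 : ((k.1 : ℝ) + 1) * (4 * δ) - k.1 * (4 * δ) = 4 * δ := by ring
    have e2 : ((k.2 : ℝ) + 2) * δ - (k.2 + 1) * δ = δ := by ring
    rw [e1, e2]
    refine mul_le_mul_of_nonneg_left ?_ (by positivity)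
    -- As `cos` decreases, `cos x * δ` dominates the increment of `sin` over `[x, x + δ]`.
    set x := ((k.2 : ℝ) + 2) * δ with hx
    have e3 : ((k.2 : ℝ) + 3) * δ = x + δ := by rw [hx]; ring
    have hx1 : x < Real.pi / 2 := by nlinarith
    have hx0 : 0 < x := by positivity
    have c0 : 0 ≤ Real.cos x := Real.cos_nonneg_of_neg_pi_div_two_le_of_le (by linarith) hx1.le
    have s0 : 0 ≤ Real.sin x := Real.sin_nonneg_of_nonneg_of_le_pi hx0.le (by linarith)
    rw [e3, Real.sin_add]
    nlinarith [Real.cos_le_one δ, Real.sin_le hδ0.le]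
  calc _ = ∑ k ∈ I, ENNReal.ofReal (Real.cos (2 * δ) ^ 2 * (4 * δ) *
      (Real.sin ((k.2 + 3) * δ) - Real.sin ((k.2 + 2) * δ))) := by
        rw [← ENNReal.ofReal_sum_of_nonneg]
        · congr 1
          rw [← Finset.mul_sum, hI, Finset.sum_product]
          have tel := Finset.sum_range_sub (fun k : ℕ => Real.sin (((k : ℝ) + 2) * δ)) (n + 1)
          have tel' : ∑ k ∈ Finset.range (n + 1),
              (Real.sin (((k : ℝ) + 3) * δ) - Real.sin ((k + 2) * δ)) = 1 - Real.sin (2 * δ) := by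
            rw [← Real.sin_pi_div_two, ← hδN]
            convert tel using 3 <;> push_cast <;> ring_nf
          simp only [tel', Finset.sum_const, Finset.card_range, nsmul_eq_mul]
          push_cast
          linear_combination (-4 * Real.cos (2 * δ) ^ 2 * (1 - Real.sin (2 * δ))) * hδN
        · intro k hk
          simp only [hI, Finset.mem_product, Finset.mem_range] at hk
          have k2 : (k.2 : ℝ) + 1 ≤ n + 1 := by exact_mod_cast hk.2
          have k0 : (0 : ℝ) ≤ k.2 := k.2.cast_nonneg
          refine mul_nonneg (by positivity) (sub_nonneg.2 ?_)
          exact Real.sin_le_sin_of_le_of_le_pi_div_two (by nlinarith) (by nlinarith) (by nlinarith)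
    _ ≤ ∑ k ∈ I, μH[2] (sph '' cell k) := Finset.sum_le_sum hlow
    _ = μH[2] (⋃ k ∈ I, sph '' cell k) := (measure_biUnion_finset hdisj hmeas).symm
    _ ≤ _ := measure_mono (Set.iUnion₂_subset fun k hk => Set.image_mono (hsub k hk))

/-- The band of latitudes in `[-a, a]`. The factor `16 π` is the product of the squared Lipschitz
constant `4` of `sph` and the area `4 π a` of the parameter rectangle. -/
lemma band_measure {a : ℝ} (ha : 0 ≤ a) (ha' : a ≤ Real.pi / 2) :
    μH[2] {u : EuclideanSpace ℝ (Fin 3) | ‖u‖ = 1 ∧ |u 2| ≤ Real.sin a} ≤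
      ENNReal.ofReal (16 * Real.pi * a) := by
  have hpi := Real.pi_pos
  have hsub : {u : EuclideanSpace ℝ (Fin 3) | ‖u‖ = 1 ∧ |u 2| ≤ Real.sin a} ⊆
      sph '' (Set.Icc (-Real.pi) Real.pi ×ˢ Set.Icc (-a) a) := by
    rintro u ⟨hu, hz⟩
    have hn : u 0 ^ 2 + u 1 ^ 2 + u 2 ^ 2 = 1 := by
      have := EuclideanSpace.norm_sq_eq u
      simpa [hu, Fin.sum_univ_three] using this.symm
    rw [abs_le] at hz
    set z : ℂ := ⟨u 0, u 1⟩ with hzdef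
    have hnorm : ‖z‖ = Real.cos (Real.arcsin (u 2)) := by
      rw [Real.cos_arcsin, Complex.norm_def, Complex.normSq_apply]
      congr 1
      simp only [hzdef]
      linarith
    refine ⟨(z.arg, Real.arcsin (u 2)), ⟨⟨(Complex.neg_pi_lt_arg z).le, Complex.arg_le_pi z⟩,
      ?_, ?_⟩, ?_⟩
    · rw [← Real.arcsin_sin (x := -a) (by linarith) (by linarith), Real.sin_neg]
      exact Real.monotone_arcsin hz.1
    · rw [← Real.arcsin_sin (x := a) (by linarith) (by linarith)]
      exact Real.monotone_arcsin hz.2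
    · have h1 := Complex.norm_mul_cos_arg z
      have h2 := Complex.norm_mul_sin_arg z
      have h3 : Real.sin (Real.arcsin (u 2)) = u 2 :=
        Real.sin_arcsin (by nlinarith [sq_nonneg (u 0), sq_nonneg (u 1)])
          (by nlinarith [sq_nonneg (u 0), sq_nonneg (u 1)])
      rw [hnorm] at h1 h2
      ext i
      fin_cases i
      · simpa [sph] using h1
      · simpa [sph] using h2
      · simpa [sph] using h3
  refine (measure_mono hsub).trans ((lipschitzWith_sph.hausdorffMeasure_image_le zero_le_two _).trans
    (le_of_eq ?_))
  rw [hausdorffMeasure_prod_real, Measure.volume_eq_prod, Measure.prod_prod, Real.volume_Icc,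
    Real.volume_Icc, ← ENNReal.ofReal_mul (by linarith), ENNReal.coe_ofNat, ENNReal.rpow_ofNat,
    ← ENNReal.ofReal_ofNat 2, ← ENNReal.ofReal_pow zero_le_two, ← ENNReal.ofReal_mul (by norm_num)]
  congr 1
  ring

/-! ### The flat tetrahedron -/

/-- The vertices of the flat tetrahedron: an apex at depth `h` below a fixed horizontal triangle
that contains the unit disc. -/
noncomputable def vert (h : ℝ) : Fin 4 → EuclideanSpace ℝ (Fin 3) :=
  ![!₂[0, 0, -h], !₂[-1, -1, 0], !₂[4, -1, 0], !₂[-1, 4, 0]]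

lemma affineIndependent_vert {h : ℝ} (hh : h ≠ 0) : AffineIndependent ℝ (vert h) := by
  rw [affineIndependent_iff_of_fintype]
  intro w hw hs
  rw [Finset.weightedVSub_eq_linear_combination _ hw] at hs
  have e := fun i => congrArg (fun u : EuclideanSpace ℝ (Fin 3) => u i) hs
  have e0 := e 0
  have e1 := e 1
  have e2 := e 2
  simp [vert, Fin.sum_univ_four] at e0 e1 e2
  rw [Fin.sum_univ_four] at hw
  have w0 : w 0 = 0 := e2.resolve_right hh
  intro i
  fin_cases i <;> simp <;> linarith

/-- The ray from the apex in direction `sph p` meets the base plane at distance at most `1` from the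
origin in each coordinate, hence inside the base triangle. -/
lemma sph_mem_apex {h : ℝ} (hh : 0 < h) {p : ℝ × ℝ} (hp : h ≤ Real.sin p.2) :
    ∃ t > (0 : ℝ), vert h 0 + t • sph p ∈ convexHull ℝ (Set.range (vert h)) := by
  have hs := hh.trans_le hp
  refine ⟨h / Real.sin p.2, by positivity, ?_⟩
  have hr : h / Real.sin p.2 ≤ 1 := (div_le_one hs).2 hp
  have hr0 : 0 < h / Real.sin p.2 := by positivity
  have hrz : h / Real.sin p.2 * Real.sin p.2 = h := by field_simp
  set r := h / Real.sin p.2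
  have hx : |r * (Real.cos p.2 * Real.cos p.1)| ≤ 1 := by
    rw [abs_mul, abs_mul, abs_of_pos hr0]
    exact mul_le_one₀ hr (by positivity)
      (mul_le_one₀ (Real.abs_cos_le_one _) (by positivity) (Real.abs_cos_le_one _))
  have hy : |r * (Real.cos p.2 * Real.sin p.1)| ≤ 1 := by
    rw [abs_mul, abs_mul, abs_of_pos hr0]
    exact mul_le_one₀ hr (by positivity)
      (mul_le_one₀ (Real.abs_cos_le_one _) (by positivity) (Real.abs_sin_le_one _))
  rw [abs_le] at hx hy
  set x := r * (Real.cos p.2 * Real.cos p.1) with hxdef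
  set y := r * (Real.cos p.2 * Real.sin p.1) with hydef
  have hw := (convex_convexHull ℝ (Set.range (vert h))).sum_mem (t := Finset.univ)
    (w := ![0, (3 - x - y) / 5, (x + 1) / 5, (y + 1) / 5]) (z := vert h)
    (by
      intro i _
      fin_cases i
      · simp
      · simp; linarith
      · simp; linarith
      · simp; linarith)
    (by simp [Fin.sum_univ_four]; ring)
    (fun i _ => subset_convexHull ℝ _ ⟨i, rfl⟩)
  convert hw using 1
  ext i
  fin_cases i
  · simp [vert, sph, Fin.sum_univ_four, ← hxdef]; ring
  · simp [vert, sph, Fin.sum_univ_four, ← hydef]; ring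
  · simp [vert, sph, Fin.sum_univ_four, hrz]

/-- Unit directions pointing from a base vertex into the tetrahedron are nearly horizontal. -/
lemma abs_le_of_mem_base {h : ℝ} (hh : 0 < h) {j : Fin 4} (hj : j ≠ 0)
    {u : EuclideanSpace ℝ (Fin 3)} (hu : ‖u‖ = 1) {t : ℝ} (ht : 0 < t)
    (hmem : vert h j + t • u ∈ convexHull ℝ (Set.range (vert h))) : |u 2| ≤ 2 * h := by
  have hc : ∀ i, |u i| ≤ 1 := fun i => by
    have := PiLp.norm_apply_le u i
    rwa [hu] at this
  have c0 := abs_le.1 (hc 0)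
  have c1 := abs_le.1 (hc 1)
  -- An affine inequality that holds at the vertices holds on the whole tetrahedron.
  have half : ∀ a b c d : ℝ, (∀ i, 0 ≤ a * vert h i 0 + b * vert h i 1 + c * vert h i 2 + d) →
      0 ≤ a * (vert h j + t • u) 0 + b * (vert h j + t • u) 1 + c * (vert h j + t • u) 2 + d := by
    intro a b c d hi
    have hcv : Convex ℝ {p : EuclideanSpace ℝ (Fin 3) | 0 ≤ a * p 0 + b * p 1 + c * p 2 + d} := by
      intro p hp q hq s r hs hr hsr
      simp only [Set.mem_ofPred_eq, PiLp.add_apply, PiLp.smul_apply, smul_eq_mul] at *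
      have e : a * (s * p 0 + r * q 0) + b * (s * p 1 + r * q 1) + c * (s * p 2 + r * q 2) + d
        = s * (a * p 0 + b * p 1 + c * p 2 + d) + r * (a * q 0 + b * q 1 + c * q 2 + d) := by
        linear_combination (-d) * hsr
      rw [e]
      positivity
    exact convexHull_min (by rintro _ ⟨i, rfl⟩; exact hi i) hcv hmem
  have up := half 0 0 (-1) 0 (by intro i; fin_cases i <;> simp [vert, hh.le])
  have z0 : vert h j 2 = 0 := by fin_cases j <;> simp_all [vert]
  simp only [PiLp.add_apply, PiLp.smul_apply, smul_eq_mul, z0] at up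
  have up' : t * u 2 ≤ 0 := by linarith
  -- For each base vertex, `h` times a horizontal functional vanishing at that vertex and at least
  -- `1` at the other vertices dominates the depth; it is at most `2` on unit vectors.
  have lo : -(2 * h) * t ≤ t * u 2 := by
    fin_cases j
    · exact absurd rfl hj
    · have := half h h 1 (2 * h) (by intro i; fin_cases i <;> simp [vert] <;> linarith)
      simp [vert] at this
      nlinarith [mul_pos hh ht]
    · have := half (-h) 0 1 (4 * h) (by intro i; fin_cases i <;> simp [vert] <;> linarith)
      simp [vert] at this
      nlinarith [mul_pos hh ht]
    · have := half 0 (-h) 1 (4 * h) (by intro i; fin_cases i <;> simp [vert] <;> linarith)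
      simp [vert] at this
      nlinarith [mul_pos hh ht]
  rw [abs_le]
  constructor <;> nlinarith

end ThinTetrahedron

/-- For every `ε > 0` there is a nondegenerate tetrahedron with one solid angle greater
than `2π - ε` and the other three solid angles less than `ε`; hence the average of the
solid angles can be arbitrarily close to `π/2` and an averaging argument cannot prove
the minimal-solid-angle bound. -/
theorem exists_tetrahedron_one_big_three_small_solidAngles
    (ε : ℝ) (hε : 0 < ε) :
    ∃ v : Fin 4 → EuclideanSpace ℝ (Fin 3),
      AffineIndependent ℝ v ∧
      ∃ i : Fin 4,
        ENNReal.ofReal (2 * Real.pi - ε) <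
          solidAngle3 (convexHull ℝ (Set.range v)) (v i) ∧
        ∀ j, j ≠ i →
          solidAngle3 (convexHull ℝ (Set.range v)) (v j) < ENNReal.ofReal ε := by

  have hpi := Real.pi_pos
  obtain ⟨n, hn⟩ : ∃ n : ℕ, 2 * Real.pi - ε < Real.cos (Real.pi / (n + 3)) ^ 2 * (2 * Real.pi) *
      (1 - Real.sin (Real.pi / (n + 3))) := by
    have h0 : Filter.Tendsto (fun n : ℕ => Real.pi / ((n : ℝ) + 3)) Filter.atTop (nhds 0) :=
      tendsto_const_nhds.div_atTop
        (Filter.tendsto_atTop_add_const_right _ _ tendsto_natCast_atTop_atTop)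
    have hcont : Continuous fun x : ℝ => Real.cos x ^ 2 * (2 * Real.pi) * (1 - Real.sin x) := by
      fun_prop
    have h1 := (hcont.tendsto 0).comp h0
    simp only [Real.cos_zero, Real.sin_zero, one_pow, one_mul, sub_zero, mul_one] at h1
    exact (h1.eventually_const_lt (by linarith)).exists
  have hN : (0 : ℝ) < n + 3 := by positivity
  set δ := Real.pi / (2 * ((n : ℝ) + 3)) with hδ
  have hδ0 : 0 < δ := by positivity
  have hδ1 : δ < Real.pi / 2 := by
    rw [hδ, div_lt_div_iff_of_pos_left hpi (by positivity) two_pos]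
    linarith
  set a := min δ (ε / (32 * Real.pi)) with ha
  have ha0 : 0 < a := lt_min hδ0 (by positivity)
  have haδ : a ≤ δ := min_le_left _ _
  have haε : 16 * Real.pi * a < ε := by
    have : a ≤ ε / (32 * Real.pi) := min_le_right _ _
    rw [le_div_iff₀ (by positivity)] at this
    linarith
  set h := Real.sin a / 2 with hh
  have hsa : 0 < Real.sin a := Real.sin_pos_of_pos_of_lt_pi ha0 (by linarith)
  have hh0 : 0 < h := by positivity
  have hle : ∀ f ∈ Set.Ico δ (Real.pi / 2), h ≤ Real.sin f := fun f hf => by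
    have := Real.sin_le_sin_of_le_of_le_pi_div_two (x := a) (y := f) (by linarith) hf.2.le
      (haδ.trans hf.1)
    linarith
  refine ⟨ThinTetrahedron.vert h, ThinTetrahedron.affineIndependent_vert hh0.ne', 0, ?_, fun j hj => ?_⟩
  · refine lt_of_lt_of_le ((ENNReal.ofReal_lt_ofReal_iff ?_).2 hn) ((ThinTetrahedron.cap_measure n).trans ?_)
    · have hx : Real.pi / ((n : ℝ) + 3) < Real.pi / 2 := by
        rw [div_lt_div_iff_of_pos_left hpi hN two_pos]
        have : (0 : ℝ) ≤ n := n.cast_nonneg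
        linarith
      have hx0 : 0 < Real.pi / ((n : ℝ) + 3) := by positivity
      have hc := Real.cos_pos_of_mem_Ioo
        (x := Real.pi / ((n : ℝ) + 3)) ⟨by linarith, hx⟩
      have hs : Real.sin (Real.pi / ((n : ℝ) + 3)) < 1 := by
        nlinarith [Real.sin_sq_add_cos_sq (Real.pi / ((n : ℝ) + 3))]
      have : 0 < 1 - Real.sin (Real.pi / ((n : ℝ) + 3)) := by linarith
      positivity
    · refine measure_mono ?_
      rintro _ ⟨p, hp, rfl⟩
      exact ⟨ThinTetrahedron.norm_sph p, ThinTetrahedron.sph_mem_apex hh0 (hle _ hp.2)⟩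
  · refine lt_of_le_of_lt ((measure_mono ?_).trans (ThinTetrahedron.band_measure ha0.le (by linarith)))
      ((ENNReal.ofReal_lt_ofReal_iff hε).2 haε)
    rintro u ⟨hu, t, ht, hmem⟩
    refine ⟨hu, (ThinTetrahedron.abs_le_of_mem_base hh0 hj hu ht hmem).trans (le_of_eq ?_)⟩
    rw [hh]
    ring
end

section
/- Isoperimetric inequality for spherical triangles: let u₁, u₂, u₃ be linearly independent unit vectors in ℝ³ spanning the cone S, and let w₀, w₁, w₂ with wₖ = (sin θ · cos(2πk/3), sin θ · sin(2πk/3), cos θ) for some θ ∈ (0, π/2) span the cone C (a regular spherical triangle). If the 2-dimensional Hausdorff measure of S ∩ S² equals that of C ∩ S² (equal areas), then the perimeter of the spherical triangle S ∩ S², namely arccos⟪u₁,u₂⟫ + arccos⟪u₂,u₃⟫ + arccos⟪u₃,u₁⟫, is at least the perimeter 3·arccos⟪w₀,w₁⟫ of the regular spherical triangle C ∩ S². -/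
/-!
The idea is to express the area of a spherical triangle through its sides and then to use the
inequality of arithmetic and geometric means on the resulting formula.

*Area and angles.* The area measure `sphM` is invariant under linear isometries, is finite and
positive, and gives no mass to great circles. Averaging over rotations about the axis of a lune
shows that its area is proportional to its angle (`sphM_real_lune`), and inclusion-exclusion together
with the antipodal map yields Girard's formula (`girard`): a triangle with angles `α, β, γ` covers
the fraction `E / (4π)` of the sphere, where `E = α + β + γ - π`. The formula is homogeneous in the
area of the sphere, so the normalization of the Hausdorff measure is irrelevant.

*Area and sides.* The angles are determined by the cosines `x, y, z` of the sides through the law of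
cosines, and `1 + x + y + z = √(2 (1 + x) (1 + y) (1 + z)) * cos (E / 2)` (`excess_half`,
`cos_half_excess`). In terms of the sides `a, b, c` and the semiperimeter `s` this is Lhuilier's
theorem, `tan² (E / 4) = tan (s / 2) tan ((s - a) / 2) tan ((s - b) / 2) tan ((s - c) / 2)`
(`half_angle_identities`).

*Comparison.* For a fixed semiperimeter `s < π` the product of the last three tangents is at most
`tan³ (s / 6)` (`tan_mul_le`), with equality for the equilateral triangle, and
`tan (s / 2) tan³ (s / 6)` is increasing in `s`. Hence at equal area the equilateral triangle has
the smaller perimeter (`perimeter_le`). Perimeters of at least `2π` exceed that of the regular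
triangle trivially.
-/

open MeasureTheory
open scoped ENNReal RealInnerProductSpace

/-- The cone generated by a finite family of vectors: all nonnegative linear combinations. -/
def coneGen {n : ℕ} (u : Fin n → EuclideanSpace ℝ (Fin 3)) :
    Set (EuclideanSpace ℝ (Fin 3)) :=
  {x | ∃ c : Fin n → ℝ, (∀ i, 0 ≤ c i) ∧ x = ∑ i, c i • u i}

/-- The `k`-th vertex of the regular spherical `n`-gon at colatitude `θ`:
`(sin θ · cos (2πk/n), sin θ · sin (2πk/n), cos θ)`. -/
noncomputable def regVec (n : ℕ) (θ : ℝ) (k : ℕ) : EuclideanSpace ℝ (Fin 3) :=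
  (EuclideanSpace.equiv (Fin 3) ℝ).symm
    ![Real.sin θ * Real.cos (2 * Real.pi * k / n),
      Real.sin θ * Real.sin (2 * Real.pi * k / n),
      Real.cos θ]

/-! ### The area measure of the sphere -/

/-- Euclidean three-space. -/
abbrev E3 := EuclideanSpace ℝ (Fin 3)

/-- Area on the unit sphere: 2-dimensional Hausdorff measure restricted to `S²`, regarded as a
measure on the ambient space so that cones can be measured without intersecting them with `S²`.
Its total mass is never computed; only finiteness and positivity are used. -/
noncomputable def sphM : Measure E3 := (μH[2] : Measure E3).restrict (Metric.sphere 0 1)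

lemma sphM_apply (s : Set E3) : sphM s = μH[2] (s ∩ Metric.sphere (0 : E3) 1) :=
  Measure.restrict_apply' Metric.isClosed_sphere.measurableSet

lemma norm_sq_eq (x : E3) : ‖x‖ ^ 2 = x 0 ^ 2 + x 1 ^ 2 + x 2 ^ 2 := by
  rw [EuclideanSpace.real_norm_sq_eq, Fin.sum_univ_three]

lemma mem_sphere_iff (x : E3) : x ∈ Metric.sphere (0 : E3) 1 ↔ x 0 ^ 2 + x 1 ^ 2 + x 2 ^ 2 = 1 := by
  rw [mem_sphere_zero_iff_norm, ← norm_sq_eq]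
  constructor
  · intro h; rw [h]; norm_num
  · intro h; exact (pow_eq_one_iff_of_nonneg (norm_nonneg x) two_ne_zero).mp h

/-- The sphere is the image of a compact rectangle under the smooth longitude-latitude
parametrization, hence has finite area. -/
instance : IsFiniteMeasure sphM := by
  constructor
  rw [sphM_apply, Set.univ_inter]
  let f : (Fin 2 → ℝ) → E3 := fun p => !₂[Real.cos (p 0) * Real.cos (p 1),
    Real.cos (p 0) * Real.sin (p 1), Real.sin (p 0)]
  have hf : ContDiff ℝ 1 f := by
    rw [contDiff_euclidean]
    intro i
    have h0 : ContDiff ℝ 1 (fun p : Fin 2 → ℝ => p 0) := contDiff_apply _ _ _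
    have h1 : ContDiff ℝ 1 (fun p : Fin 2 → ℝ => p 1) := contDiff_apply _ _ _
    fin_cases i
    · exact h0.cos.mul h1.cos
    · exact h0.cos.mul h1.sin
    · exact h0.sin
  have hK : IsCompact (Set.Icc (fun _ => -4 : Fin 2 → ℝ) (fun _ => 4)) := isCompact_Icc
  obtain ⟨K, hL⟩ := LocallyLipschitzOn.exists_lipschitzOnWith_of_compact hK
    hf.locallyLipschitz.locallyLipschitzOn
  have hsub : Metric.sphere (0 : E3) 1 ⊆ f '' Set.Icc (fun _ => -4 : Fin 2 → ℝ) (fun _ => 4) := by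
    intro x hx
    rw [mem_sphere_iff] at hx
    have hpi := Real.pi_lt_four
    have h2 : x 2 ∈ Set.Icc (-1 : ℝ) 1 := by
      constructor <;> nlinarith [sq_nonneg (x 0), sq_nonneg (x 1)]
    let z : ℂ := ⟨x 0, x 1⟩
    refine ⟨![Real.arcsin (x 2), Complex.arg z], ?_, ?_⟩
    · constructor <;> intro i <;> fin_cases i <;> simp
      · linarith [Real.neg_pi_div_two_le_arcsin (x 2), Real.pi_pos]
      · linarith [Complex.neg_pi_lt_arg z]
      · linarith [Real.arcsin_le_pi_div_two (x 2), Real.pi_pos]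
      · linarith [Complex.arg_le_pi z]
    · have hz : ‖z‖ = Real.cos (Real.arcsin (x 2)) := by
        rw [Real.cos_arcsin, Complex.norm_eq_sqrt_sq_add_sq]
        congr 1
        simp only [z]; linarith
      have hre := Complex.norm_mul_cos_arg z
      have him := Complex.norm_mul_sin_arg z
      rw [hz] at hre him
      ext i
      fin_cases i
      · simpa [f] using hre
      · simpa [f] using him
      · simpa [f] using Real.sin_arcsin h2.1 h2.2
  refine (measure_mono hsub).trans_lt ((hL.hausdorffMeasure_image_le zero_le_two).trans_lt ?_)
  refine ENNReal.mul_lt_top (ENNReal.rpow_lt_top_of_nonneg zero_le_two ENNReal.coe_ne_top) ?_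
  have : (μH[2] : Measure (Fin 2 → ℝ)) = volume := by
    have := @hausdorffMeasure_pi_real (Fin 2) _
    simpa using this
  rw [this]
  exact hK.measure_lt_top

/-- The sphere projects 1-Lipschitz onto a set containing a small disc, hence has positive
area. -/
lemma sphM_univ_pos : 0 < sphM Set.univ := by
  rw [sphM_apply, Set.univ_inter]
  let g : E3 → (Fin 2 → ℝ) := fun x => ![x 0, x 1]
  have hg : LipschitzWith 1 g := by
    refine LipschitzWith.of_dist_le_mul fun x y => ?_
    rw [NNReal.coe_one, one_mul, dist_pi_le_iff dist_nonneg]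
    intro i
    have key : ∀ j : Fin 3, dist (x j) (y j) ≤ dist x y := fun j => by
      rw [dist_eq_norm, dist_eq_norm]
      exact PiLp.norm_apply_le (x - y) j
    fin_cases i
    · exact key 0
    · exact key 1
  have hsub : Metric.ball (0 : Fin 2 → ℝ) (1/2) ⊆ g '' Metric.sphere (0 : E3) 1 := by
    intro p hp
    rw [mem_ball_zero_iff] at hp
    have h0 : |p 0| < 1/2 := (norm_le_pi_norm p 0).trans_lt hp
    have h1 : |p 1| < 1/2 := (norm_le_pi_norm p 1).trans_lt hp
    have h0' : p 0 ^ 2 ≤ 1/4 := by nlinarith [abs_lt.mp h0]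
    have h1' : p 1 ^ 2 ≤ 1/4 := by nlinarith [abs_lt.mp h1]
    refine ⟨!₂[p 0, p 1, √(1 - p 0 ^ 2 - p 1 ^ 2)], ?_, ?_⟩
    · rw [mem_sphere_iff]
      simp [Real.sq_sqrt (show 0 ≤ 1 - p 0 ^ 2 - p 1 ^ 2 by linarith)]
    · ext i; fin_cases i <;> simp [g]
  have h1 := (measure_mono hsub).trans
    (hg.hausdorffMeasure_image_le zero_le_two (Metric.sphere (0 : E3) 1))
  have : (μH[2] : Measure (Fin 2 → ℝ)) = volume := by
    have := @hausdorffMeasure_pi_real (Fin 2) _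
    simpa using this
  rw [this] at h1
  simp only [ENNReal.coe_one, ENNReal.one_rpow, one_mul] at h1
  exact (Metric.measure_ball_pos volume _ (by norm_num)).trans_le h1

lemma sphM_preimage (L : E3 ≃ₗᵢ[ℝ] E3) (s : Set E3) : sphM (L ⁻¹' s) = sphM s := by
  rw [sphM_apply, sphM_apply,
    ← L.toIsometryEquiv.hausdorffMeasure_preimage 2 (s ∩ Metric.sphere 0 1)]
  congr 1
  ext x
  simp

/-- Orthonormal vectors can be moved to the corresponding standard basis vectors by an
isometry. -/
lemma exists_frame (v : Fin 3 → E3) (s : Set (Fin 3)) (hv : Orthonormal ℝ (s.domRestrict v)) :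
    ∃ L : E3 ≃ₗᵢ[ℝ] E3, ∀ x, ∀ i ∈ s, L x i = ⟪v i, x⟫ := by
  obtain ⟨b, hb⟩ := hv.exists_orthonormalBasis_extension_of_card_eq (by simp)
  exact ⟨b.repr, fun x i hi => by rw [b.repr_apply_apply, hb i hi]⟩

lemma exists_frame_two {v w : E3} (hv : ‖v‖ = 1) (hw : ‖w‖ = 1) (hvw : ⟪v, w⟫ = 0) :
    ∃ L : E3 ≃ₗᵢ[ℝ] E3, ∀ x, L x 0 = ⟪v, x⟫ ∧ L x 1 = ⟪w, x⟫ := by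
  obtain ⟨L, hL⟩ := exists_frame ![v, w, 0] {0, 1} (by
    constructor
    · rintro ⟨i, hi⟩
      rcases hi with rfl | rfl <;> simpa
    · rintro ⟨i, hi⟩ ⟨j, hj⟩ hij
      rcases hi with rfl | rfl <;> rcases hj with rfl | rfl
      · exact absurd rfl hij
      · simpa using hvw
      · simpa [real_inner_comm] using hvw
      · exact absurd rfl hij)
  exact ⟨L, fun x => ⟨by simpa using hL x 0 (by simp), by simpa using hL x 1 (by simp)⟩⟩

/-- A great circle is a smooth curve, so its Hausdorff dimension is at most one. -/
lemma sphM_coord_null : sphM {x : E3 | x 0 = 0} = 0 := by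
  rw [sphM_apply]
  let f : ℝ → E3 := fun t => !₂[0, Real.cos t, Real.sin t]
  have hf : ContDiff ℝ 1 f := by
    rw [contDiff_euclidean]
    intro i
    fin_cases i
    · exact contDiff_const
    · exact Real.contDiff_cos
    · exact Real.contDiff_sin
  have hsub : {x : E3 | x 0 = 0} ∩ Metric.sphere (0 : E3) 1 ⊆ Set.range f := by
    rintro x ⟨h0, hx⟩
    rw [mem_sphere_iff] at hx
    simp only [Set.mem_ofPred_eq] at h0
    let z : ℂ := ⟨x 1, x 2⟩
    have hz : ‖z‖ = 1 := by
      rw [Complex.norm_eq_sqrt_sq_add_sq, Real.sqrt_eq_one]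
      simp only [z]; rw [h0] at hx; linarith
    have hre := Complex.norm_mul_cos_arg z
    have him := Complex.norm_mul_sin_arg z
    rw [hz, one_mul] at hre him
    refine ⟨Complex.arg z, ?_⟩
    ext i
    fin_cases i
    · simpa [f] using h0.symm
    · simpa [f] using hre
    · simpa [f] using him
  refine measure_mono_null hsub ?_
  have : dimH (Set.range f) < ((2 : NNReal) : ℝ≥0∞) := by
    refine hf.dimH_range_le.trans_lt ?_
    simp
  simpa using hausdorffMeasure_of_dimH_lt this

lemma sphM_plane_null {n : E3} (hn : n ≠ 0) : sphM {x : E3 | ⟪n, x⟫ = 0} = 0 := by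
  obtain ⟨L, hL⟩ := exists_frame (fun _ => (‖n‖⁻¹ : ℝ) • n) {0} (by
    constructor
    · rintro ⟨i, hi⟩
      simp [norm_smul, hn]
    · rintro ⟨i, hi⟩ ⟨j, hj⟩ hij
      exact absurd (Subtype.ext (hi.trans hj.symm)) hij)
  rw [← sphM_coord_null, ← sphM_preimage L {x : E3 | x 0 = 0}]
  congr 1
  ext x
  simp [hL x 0 rfl, inner_smul_left, hn]

/-! ### The area of a lune -/

/-- The intersection of the two half-spaces with inward normals `n` and `m`; it meets the sphere
in a lune. -/
def lune (n m : E3) : Set E3 := {x | 0 ≤ ⟪n, x⟫ ∧ 0 ≤ ⟪m, x⟫}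

/-- The lune bounded by the planes through the third axis whose inward normals point in the
horizontal directions `t` and `t + φ`. Its dihedral angle is `π - φ`. -/
def stdLune (t φ : ℝ) : Set E3 := {x | 0 ≤ Real.cos t * x 0 + Real.sin t * x 1 ∧
  0 ≤ Real.cos (t + φ) * x 0 + Real.sin (t + φ) * x 1}

/-- The area of a lune depends only on the angle between the normals: Gram-Schmidt provides an
isometry onto the standard position. -/
lemma sphM_lune_eq_stdLune {n m : E3} (hn : ‖n‖ = 1) (hm : ‖m‖ = 1) {φ : ℝ}
    (hφ : φ ∈ Set.Ioo 0 Real.pi) (h : ⟪n, m⟫ = Real.cos φ) :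
    sphM (lune n m) = sphM (stdLune 0 φ) := by
  have hs : 0 < Real.sin φ := Real.sin_pos_of_pos_of_lt_pi hφ.1 hφ.2
  have hnn : ⟪n, n⟫ = (1 : ℝ) := by rw [real_inner_self_eq_norm_sq, hn]; norm_num
  have hmm : ⟪m, m⟫ = (1 : ℝ) := by rw [real_inner_self_eq_norm_sq, hm]; norm_num
  have hmn : ⟪m, n⟫ = Real.cos φ := by rw [real_inner_comm, h]
  obtain ⟨L, hL⟩ := exists_frame_two (v := n) (w := (Real.sin φ)⁻¹ • (m - Real.cos φ • n)) hn
    (by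
      have : ‖(Real.sin φ)⁻¹ • (m - Real.cos φ • n)‖ ^ 2 = 1 := by
        rw [← real_inner_self_eq_norm_sq]
        simp only [inner_smul_left, inner_smul_right, inner_sub_left, inner_sub_right, hnn, hmm,
          hmn, h]
        simp
        field_simp
        linarith [Real.sin_sq_add_cos_sq φ]
      exact (pow_eq_one_iff_of_nonneg (norm_nonneg _) two_ne_zero).mp this)
    (by simp only [inner_smul_right, inner_sub_right, hnn, h]; simp)
  rw [← sphM_preimage L (stdLune 0 φ)]
  congr 1
  ext x
  simp only [lune, stdLune, Set.mem_ofPred_eq, Set.mem_preimage, (hL x).1, (hL x).2,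
    inner_smul_left, inner_sub_left]
  have : Real.sin φ * (starRingEnd ℝ (Real.sin φ)⁻¹ * (⟪m, x⟫ - starRingEnd ℝ (Real.cos φ) * ⟪n, x⟫))
      = ⟪m, x⟫ - Real.cos φ * ⟪n, x⟫ := by
    simp; field_simp
  simp only [zero_add, Real.cos_zero, Real.sin_zero, this]
  simp

lemma sphM_stdLune (t : ℝ) {φ : ℝ} (hφ : φ ∈ Set.Ioo 0 Real.pi) :
    sphM (stdLune t φ) = sphM (stdLune 0 φ) := by
  rw [← sphM_lune_eq_stdLune (n := !₂[Real.cos t, Real.sin t, 0])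
    (m := !₂[Real.cos (t + φ), Real.sin (t + φ), 0]) _ _ hφ]
  · congr 1
    ext x
    simp [lune, stdLune, PiLp.inner_apply, Fin.sum_univ_three, mul_comm]
  · simp [PiLp.inner_apply, Fin.sum_univ_three]
    have := Real.cos_sub (t + φ) t
    rw [add_sub_cancel_left] at this
    linarith
  · rw [EuclideanSpace.norm_eq]; simp [Fin.sum_univ_three]
  · rw [EuclideanSpace.norm_eq]; simp [Fin.sum_univ_three]

/-- A point `(a, b, _)` off the plane `x 0 = 0` lies in the rotated lune `stdLune t φ` for a set of
angles `t` of length `π - φ` per period. -/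
lemma volume_rot {a b φ : ℝ} (ha : a ≠ 0) (hφ : φ ∈ Set.Ioo 0 Real.pi) :
    volume ({t : ℝ | 0 ≤ Real.cos t * a + Real.sin t * b ∧
      0 ≤ Real.cos (t + φ) * a + Real.sin (t + φ) * b} ∩ Set.Ioc (-Real.pi) (-Real.pi + 2 * Real.pi))
      = ENNReal.ofReal (Real.pi - φ) := by
  have hpi := Real.pi_pos
  let z : ℂ := ⟨a, b⟩
  have hz : 0 < ‖z‖ := by
    rw [norm_pos_iff]; intro h; exact ha (congrArg Complex.re h)
  set ψ := Complex.arg z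
  have hre : ‖z‖ * Real.cos ψ = a := Complex.norm_mul_cos_arg z
  have him : ‖z‖ * Real.sin ψ = b := Complex.norm_mul_sin_arg z
  have key : ∀ t, Real.cos t * a + Real.sin t * b = ‖z‖ * Real.cos (t - ψ) := fun t => by
    rw [← hre, ← him, Real.cos_sub]; ring
  simp only [key, mul_nonneg_iff_of_pos_left hz]
  have h2 : (0 : ℝ) < 2 * Real.pi := by positivity
  -- by periodicity, the window of length `2π` may be centred at the argument `ψ` of `a + b i`
  have := (isAddFundamentalDomain_Ioc h2 (-Real.pi)).measure_set_eq (μ := volume)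
    (isAddFundamentalDomain_Ioc h2 (ψ - Real.pi))
    (A := {t | 0 ≤ Real.cos (t - ψ) ∧ 0 ≤ Real.cos (t + φ - ψ)}) (by
      refine (measurableSet_le (f := fun _ => (0 : ℝ)) (g := fun t : ℝ => Real.cos (t - ψ))
        measurable_const ?_).inter (measurableSet_le (f := fun _ => (0 : ℝ))
        (g := fun t : ℝ => Real.cos (t + φ - ψ)) measurable_const ?_)
      all_goals fun_prop)
    (by
      rintro ⟨g, hg⟩
      obtain ⟨k, rfl⟩ := AddSubgroup.mem_zmultiples_iff.mp hg
      ext t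
      have e1 : (k • (2 * Real.pi)) + t - ψ = (t - ψ) + k * (2 * Real.pi) := by
        rw [zsmul_eq_mul]; ring
      have e2 : (k • (2 * Real.pi)) + t + φ - ψ = (t + φ - ψ) + k * (2 * Real.pi) := by
        rw [zsmul_eq_mul]; ring
      simp only [Set.mem_preimage, Set.mem_ofPred_eq, AddSubgroup.mk_vadd, vadd_eq_add, e1, e2,
        Real.cos_add_int_mul_two_pi])
  rw [this]
  have : {t | 0 ≤ Real.cos (t - ψ) ∧ 0 ≤ Real.cos (t + φ - ψ)} ∩
      Set.Ioc (ψ - Real.pi) (ψ - Real.pi + 2 * Real.pi)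
      = Set.Icc (ψ - Real.pi / 2) (ψ + Real.pi / 2 - φ) := by
    obtain ⟨h0, h1⟩ := hφ
    ext t
    simp only [Set.mem_inter_iff, Set.mem_ofPred_eq, Set.mem_Ioc, Set.mem_Icc]
    constructor
    · rintro ⟨⟨hc1, hc2⟩, hl, hr⟩
      have hlow : -(Real.pi / 2) ≤ t - ψ := by
        by_contra hcon
        have := Real.cos_neg_of_pi_div_two_lt_of_lt (x := -(t - ψ)) (by linarith) (by linarith)
        rw [Real.cos_neg] at this
        linarith
      have hup : t - ψ ≤ Real.pi / 2 := by
        by_contra hcon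
        have := Real.cos_neg_of_pi_div_two_lt_of_lt (x := t - ψ) (by linarith) (by linarith)
        linarith
      have hup : t + φ - ψ ≤ Real.pi / 2 := by
        by_contra hcon
        have := Real.cos_neg_of_pi_div_two_lt_of_lt (x := t + φ - ψ) (by linarith) (by linarith)
        linarith
      constructor <;> linarith
    · rintro ⟨hl, hr⟩
      refine ⟨⟨Real.cos_nonneg_of_neg_pi_div_two_le_of_le (by linarith) (by linarith),
        Real.cos_nonneg_of_neg_pi_div_two_le_of_le (by linarith) (by linarith)⟩, by linarith,
        by linarith⟩
  rw [this, Real.volume_Icc]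
  congr 1
  ring

/-- The area of a lune is proportional to its angle `π - φ`. All rotates `stdLune t φ` have the
same area, so integrating the incidence of `(t, x)` in both orders gives the area times `2π` on one
side and `π - φ` times the area of the sphere on the other. -/
lemma sphM_stdLune_val {φ : ℝ} (hφ : φ ∈ Set.Ioo 0 Real.pi) :
    sphM (stdLune 0 φ) * ENNReal.ofReal (2 * Real.pi) =
      ENNReal.ofReal (Real.pi - φ) * sphM Set.univ := by
  set I := Set.Ioc (-Real.pi) (-Real.pi + 2 * Real.pi)
  let Z : Set (ℝ × E3) := {p | p.2 ∈ stdLune p.1 φ}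
  have hZ : MeasurableSet Z := by
    refine (measurableSet_le (f := fun _ => (0 : ℝ))
      (g := fun p : ℝ × E3 => Real.cos p.1 * p.2 0 + Real.sin p.1 * p.2 1) measurable_const ?_).inter
      (measurableSet_le (f := fun _ => (0 : ℝ)) (g := fun p : ℝ × E3 =>
        Real.cos (p.1 + φ) * p.2 0 + Real.sin (p.1 + φ) * p.2 1) measurable_const ?_)
    all_goals fun_prop
  have h1 := Measure.prod_apply (μ := volume.restrict I) (ν := sphM) hZ
  have h2 := Measure.prod_apply_symm (μ := volume.restrict I) (ν := sphM) hZ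
  have e1 : ∀ t, sphM (Prod.mk t ⁻¹' Z) = sphM (stdLune 0 φ) := fun t => sphM_stdLune t hφ
  have e2 : ∀ᵐ x ∂sphM, (volume.restrict I) ((fun t => (t, x)) ⁻¹' Z) =
      ENNReal.ofReal (Real.pi - φ) := by
    have : ∀ᵐ x ∂sphM, x 0 ≠ 0 := by
      rw [ae_iff]; simpa using sphM_coord_null
    filter_upwards [this] with x hx
    rw [Measure.restrict_apply' measurableSet_Ioc]
    exact volume_rot (b := x 1) hx hφ
  rw [lintegral_congr_ae e2, h1] at h2
  simp only [e1, lintegral_const, Measure.restrict_apply_univ] at h2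
  rw [← h2, Real.volume_Ioc]
  congr 2
  ring

/-- The area of a lune with dihedral angle `α`, bounded by planes with arbitrary nonzero inward
normals, is `α / (2π)` of the sphere. The normals make the angle `π - α`, whence the sign. -/
lemma sphM_real_lune {n m : E3} (hn : n ≠ 0) (hm : m ≠ 0) {α : ℝ} (hα : α ∈ Set.Ioo 0 Real.pi)
    (h : ⟪n, m⟫ = -Real.cos α * (‖n‖ * ‖m‖)) :
    sphM.real (lune n m) * (2 * Real.pi) = α * sphM.real Set.univ := by
  have hn' : 0 < ‖n‖⁻¹ := inv_pos.mpr (norm_pos_iff.mpr hn)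
  have hm' : 0 < ‖m‖⁻¹ := inv_pos.mpr (norm_pos_iff.mpr hm)
  have e : lune n m = lune (‖n‖⁻¹ • n) (‖m‖⁻¹ • m) := by
    ext x
    simp only [lune, Set.mem_ofPred_eq, real_inner_smul_left, mul_nonneg_iff_of_pos_left hn',
      mul_nonneg_iff_of_pos_left hm']
  have hφ : Real.pi - α ∈ Set.Ioo 0 Real.pi := ⟨by linarith [hα.2], by linarith [hα.1]⟩
  have h1 := sphM_stdLune_val hφ
  rw [← sphM_lune_eq_stdLune (n := ‖n‖⁻¹ • n) (m := ‖m‖⁻¹ • m) (by simp [norm_smul, hn])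
    (by simp [norm_smul, hm]) hφ (by
      rw [real_inner_smul_left, real_inner_smul_right, h, Real.cos_pi_sub]
      have := norm_ne_zero_iff.mpr hn
      have := norm_ne_zero_iff.mpr hm
      field_simp), ← e] at h1
  have h2 := congrArg ENNReal.toReal h1
  rw [ENNReal.toReal_mul, ENNReal.toReal_mul, ENNReal.toReal_ofReal (by positivity),
    ENNReal.toReal_ofReal (by linarith [hα.1])] at h2
  rw [measureReal_def, measureReal_def, h2]
  ring

/-! ### Girard's formula -/

/-- The closed half-space with inward normal `n`. -/
def halfSp (n : E3) : Set E3 := {x | 0 ≤ ⟪n, x⟫}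

lemma measurableSet_halfSp (n : E3) : MeasurableSet (halfSp n) :=
  measurableSet_le measurable_const (by fun_prop)

/-- The antipodal map exchanges a half-space with its complement, up to a great circle. -/
lemma sphM_real_halfSp {n : E3} (hn : n ≠ 0) :
    2 * sphM.real (halfSp n) = sphM.real Set.univ := by
  have h1 : sphM.real (halfSp n)ᶜ = sphM.real (halfSp n) := by
    rw [measureReal_def, measureReal_def, ← sphM_preimage (LinearIsometryEquiv.neg ℝ) (halfSp n)]
    congr 1
    apply measure_congr
    have : ∀ᵐ x ∂sphM, ⟪n, x⟫ ≠ (0 : ℝ) := by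
      rw [ae_iff]; simpa using sphM_plane_null hn
    filter_upwards [this] with x hx
    apply propext
    change ¬ (0 ≤ ⟪n, x⟫) ↔ 0 ≤ ⟪n, -x⟫
    rw [inner_neg_right, not_le, Left.nonneg_neg_iff, le_iff_lt_or_eq]
    simp [hx]
  have h2 := measureReal_add_measureReal_compl (μ := sphM) (measurableSet_halfSp n)
  linarith

lemma measureReal_compl_union_three {μ : Measure E3} [IsFiniteMeasure μ] {A B C : Set E3}
    (hA : MeasurableSet A) (hB : MeasurableSet B) (hC : MeasurableSet C) :
    μ.real (A ∪ B ∪ C)ᶜ = μ.real Set.univ - μ.real A - μ.real B - μ.real C + μ.real (A ∩ B)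
      + μ.real (A ∩ C) + μ.real (B ∩ C) - μ.real (A ∩ B ∩ C) := by
  have h1 := measureReal_union_add_inter (μ := μ) (s := A) hB
  have h2 := measureReal_union_add_inter (μ := μ) (s := A ∪ B) hC
  have h3 := measureReal_union_add_inter (μ := μ) (s := A ∩ C) (hB.inter hC)
  have h4 := measureReal_add_measureReal_compl (μ := μ) ((hA.union hB).union hC)
  rw [← Set.union_inter_distrib_right,
    show (A ∩ C) ∩ (B ∩ C) = A ∩ B ∩ C by ext; simp; tauto] at h3
  linarith

/-- Girard's formula: the area of a spherical triangle with angles `α, β, γ` is the fraction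
`(α + β + γ - π) / (4π)` of the sphere. By the antipodal map the complement of the union of the
three half-spaces has the area of their intersection, so inclusion-exclusion determines this area
from those of the hemispheres and the lunes. -/
lemma girard {n₀ n₁ n₂ : E3} (h0 : n₀ ≠ 0) (h1 : n₁ ≠ 0) (h2 : n₂ ≠ 0) {α β γ : ℝ}
    (hα : α ∈ Set.Ioo 0 Real.pi) (hβ : β ∈ Set.Ioo 0 Real.pi) (hγ : γ ∈ Set.Ioo 0 Real.pi)
    (h01 : ⟪n₀, n₁⟫ = -Real.cos α * (‖n₀‖ * ‖n₁‖))
    (h02 : ⟪n₀, n₂⟫ = -Real.cos β * (‖n₀‖ * ‖n₂‖))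
    (h12 : ⟪n₁, n₂⟫ = -Real.cos γ * (‖n₁‖ * ‖n₂‖)) :
    sphM.real (halfSp n₀ ∩ halfSp n₁ ∩ halfSp n₂) * (4 * Real.pi) =
      (α + β + γ - Real.pi) * sphM.real Set.univ := by
  have e := measureReal_compl_union_three (μ := sphM) (measurableSet_halfSp n₀)
    (measurableSet_halfSp n₁) (measurableSet_halfSp n₂)
  have l1 := sphM_real_lune h0 h1 hα h01
  have l2 := sphM_real_lune h0 h2 hβ h02
  have l3 := sphM_real_lune h1 h2 hγ h12
  have anti : sphM.real (halfSp n₀ ∪ halfSp n₁ ∪ halfSp n₂)ᶜ =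
      sphM.real (halfSp n₀ ∩ halfSp n₁ ∩ halfSp n₂) := by
    rw [measureReal_def, measureReal_def, ← sphM_preimage (LinearIsometryEquiv.neg ℝ)
      (halfSp n₀ ∩ halfSp n₁ ∩ halfSp n₂)]
    congr 1
    apply measure_congr
    have hne : ∀ {n : E3}, n ≠ 0 → ∀ᵐ x ∂sphM, ⟪n, x⟫ ≠ (0 : ℝ) := fun hn => by
      rw [ae_iff]; simpa using sphM_plane_null hn
    filter_upwards [hne h0, hne h1, hne h2] with x hx0 hx1 hx2
    apply propext
    change ¬ ((0 ≤ ⟪n₀, x⟫ ∨ 0 ≤ ⟪n₁, x⟫) ∨ 0 ≤ ⟪n₂, x⟫) ↔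
      (0 ≤ ⟪n₀, -x⟫ ∧ 0 ≤ ⟪n₁, -x⟫) ∧ 0 ≤ ⟪n₂, -x⟫
    simp only [inner_neg_right, not_or, not_le, Left.nonneg_neg_iff, hx0.le_iff_lt, hx1.le_iff_lt,
      hx2.le_iff_lt]
  rw [anti] at e
  have g0 := sphM_real_halfSp h0
  have g1 := sphM_real_halfSp h1
  have g2 := sphM_real_halfSp h2
  change sphM.real (halfSp n₀ ∩ halfSp n₁) * _ = _ at l1
  change sphM.real (halfSp n₀ ∩ halfSp n₂) * _ = _ at l2
  change sphM.real (halfSp n₁ ∩ halfSp n₂) * _ = _ at l3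
  linear_combination 2 * Real.pi * e + l1 + l2 + l3 - Real.pi * (g0 + g1 + g2)

/-! ### The spherical excess in terms of the sides -/

/-- The Gram determinant of three unit vectors with pairwise inner products `x, y, z`. -/
noncomputable def gramDet (x y z : ℝ) : ℝ := 1 + 2 * x * y * z - x ^ 2 - y ^ 2 - z ^ 2

/-- The angle opposite to the side with cosine `x` in a spherical triangle whose sides have cosines
`x, y, z`, as given by the spherical law of cosines. -/
noncomputable def dih (x y z : ℝ) : ℝ :=
  Real.arccos ((x - y * z) / (√(1 - y ^ 2) * √(1 - z ^ 2)))

lemma dih_spec {x y z : ℝ} (hy : 0 < 1 - y ^ 2) (hz : 0 < 1 - z ^ 2) (hG : 0 < gramDet x y z) :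
    dih x y z ∈ Set.Ioo 0 Real.pi ∧
    Real.cos (dih x y z) = (x - y * z) / (√(1 - y ^ 2) * √(1 - z ^ 2)) ∧
    Real.sin (dih x y z) = √(gramDet x y z) / (√(1 - y ^ 2) * √(1 - z ^ 2)) := by
  have hq := Real.sqrt_pos.mpr hy
  have hr := Real.sqrt_pos.mpr hz
  have e : 1 - ((x - y * z) / (√(1 - y ^ 2) * √(1 - z ^ 2))) ^ 2 =
      gramDet x y z / ((1 - y ^ 2) * (1 - z ^ 2)) := by
    rw [div_pow, mul_pow, Real.sq_sqrt hy.le, Real.sq_sqrt hz.le]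
    field_simp
    unfold gramDet
    ring
  have hpos : 0 < 1 - ((x - y * z) / (√(1 - y ^ 2) * √(1 - z ^ 2))) ^ 2 := by
    rw [e]; positivity
  obtain ⟨hl, hu⟩ := abs_lt.mp ((sq_lt_one_iff_abs_lt_one _).mp (sub_pos.mp hpos))
  refine ⟨⟨Real.arccos_pos.mpr hu, ?_⟩, Real.cos_arccos hl.le hu.le, ?_⟩
  · refine lt_of_le_of_ne (Real.arccos_le_pi _) fun h => ?_
    rw [dih, Real.arccos_eq_pi] at h
    linarith
  · rw [dih, Real.sin_arccos, e, Real.sqrt_div hG.le, Real.sqrt_mul hy.le]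

lemma eq_of_cos_sin_eq {a b : ℝ} (ha : a ∈ Set.Ico 0 (2 * Real.pi))
    (hb : b ∈ Set.Ico 0 (2 * Real.pi)) (hc : Real.cos a = Real.cos b)
    (hs : Real.sin a = Real.sin b) : a = b := by
  have : Real.cos (a - b) = 1 := by
    rw [Real.cos_sub, hc, hs]; nlinarith [Real.sin_sq_add_cos_sq b]
  rw [Real.cos_eq_one_iff_of_lt_of_lt (by linarith [ha.1, hb.2]) (by linarith [ha.2, hb.1])] at this
  linarith

/-- The cosine of half the spherical excess `E`, in terms of the cosines of the sides. The proof
checks that `E` and `2ω` have the same cosine and sine, where `ω` is the angle with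
`cos ω = (1 + x + y + z) / √(2 (1 + x) (1 + y) (1 + z))`; both angles lie in `[0, 2π)`. -/
lemma excess_half {x y z : ℝ} (hx : 0 < 1 - x ^ 2) (hy : 0 < 1 - y ^ 2)
    (hz : 0 < 1 - z ^ 2) (hG : 0 < gramDet x y z)
    (hE0 : 0 ≤ dih x y z + dih y x z + dih z x y - Real.pi) :
    1 + x + y + z = √(2 * (1 + x) * (1 + y) * (1 + z)) *
      Real.cos ((dih x y z + dih y x z + dih z x y - Real.pi) / 2) := by
  have hG2 : gramDet y x z = gramDet x y z := by unfold gramDet; ring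
  have hG3 : gramDet z x y = gramDet x y z := by unfold gramDet; ring
  obtain ⟨ha, hca, hsa⟩ := dih_spec hy hz hG
  obtain ⟨hb, hcb, hsb⟩ := dih_spec hx hz (hG2 ▸ hG)
  obtain ⟨hc, hcc, hsc⟩ := dih_spec hx hy (hG3 ▸ hG)
  rw [hG2] at hsb
  rw [hG3] at hsc
  set α := dih x y z
  set β := dih y x z
  set γ := dih z x y
  have hx1 : 0 < 1 + x := by nlinarith
  have hy1 : 0 < 1 + y := by nlinarith
  have hz1 : 0 < 1 + z := by nlinarith
  have hP := Real.sqrt_pos.mpr hx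
  have hQ := Real.sqrt_pos.mpr hy
  have hS := Real.sqrt_pos.mpr hz
  have hP2 := Real.sq_sqrt hx.le
  have hQ2 := Real.sq_sqrt hy.le
  have hS2 := Real.sq_sqrt hz.le
  have hg2 := Real.sq_sqrt hG.le
  have hR2 : √(2 * (1 + x) * (1 + y) * (1 + z)) ^ 2 = 2 * (1 + x) * (1 + y) * (1 + z) :=
    Real.sq_sqrt (by positivity)
  have hR : 0 < √(2 * (1 + x) * (1 + y) * (1 + z)) := Real.sqrt_pos.mpr (by positivity)
  have hg : 0 < √(gramDet x y z) := Real.sqrt_pos.mpr hG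
  generalize √(2 * (1 + x) * (1 + y) * (1 + z)) = R at *
  generalize √(1 - x ^ 2) = P at *
  generalize √(1 - y ^ 2) = Q at *
  generalize √(1 - z ^ 2) = S at *
  generalize √(gramDet x y z) = g at *
  -- this identity yields the sine of `ω` once its cosine is fixed
  have hDR : R ^ 2 - (1 + x + y + z) ^ 2 = g ^ 2 := by
    rw [hR2, hg2]; unfold gramDet; ring
  have hlt : ((1 + x + y + z) / R) ^ 2 < 1 := by
    rw [div_pow, div_lt_one (by positivity)]; nlinarith
  obtain ⟨hl, hu⟩ := abs_lt.mp ((sq_lt_one_iff_abs_lt_one _).mp hlt)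
  set ω := Real.arccos ((1 + x + y + z) / R) with hω
  have hcω : Real.cos ω = (1 + x + y + z) / R := Real.cos_arccos hl.le hu.le
  have hsω : Real.sin ω = g / R := by
    rw [hω, Real.sin_arccos, show 1 - ((1 + x + y + z) / R) ^ 2 = (g / R) ^ 2 by
      field_simp; linarith, Real.sqrt_sq (by positivity)]
  have hω0 : 0 ≤ ω := Real.arccos_nonneg _
  have hωπ : ω < Real.pi := by
    refine lt_of_le_of_ne (Real.arccos_le_pi _) fun h => ?_
    rw [hω, Real.arccos_eq_pi] at h
    linarith
  have hEω : α + β + γ - Real.pi = 2 * ω := by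
    refine eq_of_cos_sin_eq ⟨hE0, by linarith [ha.2, hb.2, hc.2]⟩ ⟨by linarith, by linarith⟩ ?_ ?_
    · rw [Real.cos_sub_pi, Real.cos_two_mul, hcω, Real.cos_add, Real.cos_add, Real.sin_add, hca,
        hcb, hcc, hsa, hsb, hsc]
      have : -((x - y * z) / (Q * S) * ((y - x * z) / (P * S)) - g / (Q * S) * (g / (P * S))) *
          ((z - x * y) / (P * Q)) + (g / (Q * S) * ((y - x * z) / (P * S)) +
          (x - y * z) / (Q * S) * (g / (P * S))) * (g / (P * Q)) =
          (g ^ 2 * ((x - y * z) + (y - x * z) + (z - x * y)) -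
            (x - y * z) * (y - x * z) * (z - x * y)) / (P ^ 2 * Q ^ 2 * S ^ 2) := by
        field_simp; ring
      have h2 : 2 * ((1 + x + y + z) / R) ^ 2 - 1 = (2 * (1 + x + y + z) ^ 2 - R ^ 2) / R ^ 2 := by
        field_simp
      rw [neg_sub, h2, hR2]
      rw [neg_mul] at this
      rw [show ∀ a b c : ℝ, c - a * b = -(a * b) + c from fun a b c => by ring, this, hg2, hP2,
        hQ2, hS2]
      rw [div_eq_div_iff (by positivity) (by positivity)]
      unfold gramDet
      ring
    · rw [Real.sin_sub_pi, Real.sin_two_mul, hcω, hsω, Real.sin_add, Real.cos_add, Real.sin_add,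
        hca, hcb, hcc, hsa, hsb, hsc]
      have : -((g / (Q * S) * ((y - x * z) / (P * S)) + (x - y * z) / (Q * S) * (g / (P * S))) *
          ((z - x * y) / (P * Q)) + ((x - y * z) / (Q * S) * ((y - x * z) / (P * S)) -
          g / (Q * S) * (g / (P * S))) * (g / (P * Q))) =
          g * (g ^ 2 - (x - y * z) * (y - x * z) - (x - y * z) * (z - x * y)
            - (y - x * z) * (z - x * y)) / (P ^ 2 * Q ^ 2 * S ^ 2) := by
        field_simp; ring
      have h2 : 2 * (g / R) * ((1 + x + y + z) / R) = 2 * g * (1 + x + y + z) / R ^ 2 := by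
        field_simp
      rw [this, h2, hR2, hg2, hP2, hQ2, hS2, div_eq_div_iff (by positivity) (by positivity)]
      unfold gramDet
      ring
  rw [hEω, mul_div_cancel_left₀ _ (two_ne_zero), hcω]
  field_simp

/-! ### The inequality between tangents and the comparison of perimeters -/

/-- For angles with sum below `π / 2`, the product of the tangents is largest when they are equal.
With `g` the geometric mean of the tangents, the AM-GM inequality for their first and second
elementary symmetric functions and the addition formulas give `3 arctan g ≤ A + B + C`. -/
lemma tan_mul_le {A B C : ℝ} (hA : 0 ≤ A) (hB : 0 ≤ B) (hC : 0 ≤ C)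
    (hs : A + B + C < Real.pi / 2) :
    Real.tan A * Real.tan B * Real.tan C ≤ Real.tan ((A + B + C) / 3) ^ 3 := by
  have hcA := Real.cos_pos_of_mem_Ioo (x := A) ⟨by linarith, by linarith⟩
  have hcB := Real.cos_pos_of_mem_Ioo (x := B) ⟨by linarith, by linarith⟩
  have hcC := Real.cos_pos_of_mem_Ioo (x := C) ⟨by linarith, by linarith⟩
  have ha : 0 ≤ Real.tan A := Real.tan_nonneg_of_nonneg_of_le_pi_div_two hA (by linarith)
  have hb : 0 ≤ Real.tan B := Real.tan_nonneg_of_nonneg_of_le_pi_div_two hB (by linarith)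
  have hc : 0 ≤ Real.tan C := Real.tan_nonneg_of_nonneg_of_le_pi_div_two hC (by linarith)
  have hsA : Real.sin A = Real.tan A * Real.cos A := (Real.tan_mul_cos hcA.ne').symm
  have hsB : Real.sin B = Real.tan B * Real.cos B := (Real.tan_mul_cos hcB.ne').symm
  have hsC : Real.sin C = Real.tan C * Real.cos C := (Real.tan_mul_cos hcC.ne').symm
  have hcp : Real.cos (A + B + C) = Real.cos A * Real.cos B * Real.cos C * (1 -
      (Real.tan A * Real.tan B + Real.tan A * Real.tan C + Real.tan B * Real.tan C)) := by
    rw [Real.cos_add, Real.cos_add, Real.sin_add, hsA, hsB, hsC]; ring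
  have hsp : Real.sin (A + B + C) = Real.cos A * Real.cos B * Real.cos C *
      (Real.tan A + Real.tan B + Real.tan C - Real.tan A * Real.tan B * Real.tan C) := by
    rw [Real.sin_add, Real.cos_add, Real.sin_add, hsA, hsB, hsC]; ring
  have hcpos := Real.cos_pos_of_mem_Ioo (x := A + B + C) ⟨by linarith, by linarith⟩
  generalize Real.tan A = a at *
  generalize Real.tan B = b at *
  generalize Real.tan C = c at *
  have hk : 0 < Real.cos A * Real.cos B * Real.cos C := by positivity
  set k := Real.cos A * Real.cos B * Real.cos C
  have he2 : a * b + a * c + b * c < 1 := by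
    rw [hcp] at hcpos
    linarith [(mul_pos_iff_of_pos_left hk).mp hcpos]
  -- the geometric mean of the tangents
  obtain ⟨g, hg0, hg⟩ : ∃ g : ℝ, 0 ≤ g ∧ g ^ 3 = a * b * c := by
    refine ⟨(a * b * c) ^ (1 / 3 : ℝ), by positivity, ?_⟩
    rw [← Real.rpow_natCast, ← Real.rpow_mul (by positivity)]
    norm_num
  have amgm : ∀ u v w q : ℝ, 0 ≤ u → 0 ≤ v → 0 ≤ w → 0 ≤ q → q ^ 3 = u * v * w →
      3 * q ≤ u + v + w := by
    intro u v w q hu hv hw hq h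
    have : (3 * q) ^ 3 ≤ (u + v + w) ^ 3 := by
      rw [mul_pow, h]
      nlinarith [mul_nonneg hu (sq_nonneg (v - w)), mul_nonneg hv (sq_nonneg (u - w)),
        mul_nonneg hw (sq_nonneg (u - v)), mul_nonneg hu (sq_nonneg (u - w)),
        mul_nonneg hu (sq_nonneg (u - v)), mul_nonneg hv (sq_nonneg (v - w)),
        mul_nonneg hv (sq_nonneg (u - v)), mul_nonneg hw (sq_nonneg (u - w)),
        mul_nonneg hw (sq_nonneg (v - w))]
    exact le_of_pow_le_pow_left₀ (by norm_num) (by positivity) this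
  have h1 : 3 * g ≤ a + b + c := amgm a b c g ha hb hc hg0 hg
  have h2 : 3 * g ^ 2 ≤ a * b + a * c + b * c :=
    amgm (a * b) (a * c) (b * c) (g ^ 2) (by positivity) (by positivity) (by positivity)
      (by positivity) (by rw [← pow_mul, mul_comm 2 3, pow_mul, hg]; ring)
  rw [← hg]
  have hφc : 0 < Real.cos (Real.arctan g) := Real.cos_arctan_pos g
  have hφs : Real.sin (Real.arctan g) = g * Real.cos (Real.arctan g) := by
    rw [← Real.tan_mul_cos hφc.ne', Real.tan_arctan]
  have hφ0 : 0 ≤ Real.arctan g := Real.arctan_nonneg.mpr hg0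
  have hφ1 : Real.arctan g < Real.pi / 2 := Real.arctan_lt_pi_div_two g
  have htan : Real.tan (Real.arctan g) = g := Real.tan_arctan g
  have hid := Real.sin_sq_add_cos_sq (Real.arctan g)
  set φ := Real.arctan g
  rw [hφs] at hid
  have hc3 : Real.cos (3 * φ) = Real.cos φ ^ 3 * (1 - 3 * g ^ 2) := by
    rw [Real.cos_three_mul]
    linear_combination (3 * Real.cos φ) * hid
  have hs3 : Real.sin (3 * φ) = Real.cos φ ^ 3 * (3 * g - g ^ 3) := by
    rw [Real.sin_three_mul, hφs]
    linear_combination (-3 * g * Real.cos φ) * hid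
  have hc3pos : 0 < Real.cos (3 * φ) := by
    rw [hc3]; exact mul_pos (by positivity) (by linarith)
  have h3φ : 3 * φ < Real.pi / 2 := by
    by_contra hcon
    have := Real.cos_nonpos_of_pi_div_two_le_of_le (x := 3 * φ) (by linarith) (by linarith)
    linarith
  have hsin : 0 ≤ Real.sin (A + B + C - 3 * φ) := by
    rw [Real.sin_sub, hcp, hsp, hc3, hs3, hg]
    have hg3 : g ^ 3 ≤ 3 * g := by nlinarith
    have : (1 - (a * b + a * c + b * c)) * (3 * g - a * b * c) ≤
        (a + b + c - a * b * c) * (1 - 3 * g ^ 2) := by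
      rw [← hg]
      rw [mul_comm]
      exact mul_le_mul (by linarith) (by linarith) (by linarith) (by linarith)
    have h := mul_le_mul_of_nonneg_left this (show 0 ≤ k * Real.cos φ ^ 3 by positivity)
    linarith
  have hle : φ ≤ (A + B + C) / 3 := by
    by_contra hcon
    have := Real.sin_neg_of_neg_of_neg_pi_lt (x := A + B + C - 3 * φ) (by linarith) (by linarith)
    linarith
  have ht : g ≤ Real.tan ((A + B + C) / 3) := by
    rw [← htan]
    exact Real.strictMonoOn_tan.monotoneOn ⟨by linarith, by linarith⟩ ⟨by linarith, by linarith⟩ hle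
  exact pow_le_pow_left₀ hg0 ht 3

/-- The two identities behind the theorem of Lhuilier. With `A, B, C` half the differences of the
semiperimeter and the sides, their quotient is
`tan² (E / 4) = tan (s / 2) tan ((s - a) / 2) tan ((s - b) / 2) tan ((s - c) / 2)`. -/
lemma half_angle_identities {A B C : ℝ} :
    4 * (Real.cos (B + C) * Real.cos (A + C) * Real.cos (A + B)) +
      (1 + Real.cos (2 * (B + C)) + Real.cos (2 * (A + C)) + Real.cos (2 * (A + B))) =
      8 * (Real.cos (A + B + C) * (Real.cos A * Real.cos B * Real.cos C)) ∧
    4 * (Real.cos (B + C) * Real.cos (A + C) * Real.cos (A + B)) -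
      (1 + Real.cos (2 * (B + C)) + Real.cos (2 * (A + C)) + Real.cos (2 * (A + B))) =
      8 * (Real.sin (A + B + C) * (Real.sin A * Real.sin B * Real.sin C)) := by
  have hA := Real.sin_sq_add_cos_sq A
  have hB := Real.sin_sq_add_cos_sq B
  have hC := Real.sin_sq_add_cos_sq C
  simp only [Real.cos_two_mul, Real.cos_add, Real.sin_add]
  generalize Real.sin A = a at *
  generalize Real.sin B = b at *
  generalize Real.sin C = c at *
  generalize Real.cos A = a' at *
  generalize Real.cos B = b' at *
  generalize Real.cos C = c' at *
  constructor
  · grind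
  · grind

/-- Monotonicity of the product in Lhuilier's theorem: the hypothesis `h`, free of denominators,
says `tan (A + B + C) tan A tan B tan C = tan (3 m) tan³ m`. -/
lemma key_ineq {A B C m : ℝ} (hA : 0 ≤ A) (hB : 0 ≤ B) (hC : 0 ≤ C)
    (hp : A + B + C < Real.pi / 2) (hm : 3 * m < Real.pi / 2)
    (h : Real.sin (A + B + C) * (Real.sin A * Real.sin B * Real.sin C) *
        (Real.cos (m + m + m) * (Real.cos m * Real.cos m * Real.cos m)) =
      Real.sin (m + m + m) * (Real.sin m * Real.sin m * Real.sin m) *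
        (Real.cos (A + B + C) * (Real.cos A * Real.cos B * Real.cos C))) :
    3 * m ≤ A + B + C := by
  by_contra hcon
  push Not at hcon
  have hpi := Real.pi_pos
  have hle := tan_mul_le hA hB hC hp
  have hmm : m + m + m = 3 * m := by ring
  rw [hmm] at h
  have hcA := Real.cos_pos_of_mem_Ioo (x := A) ⟨by linarith, by linarith⟩
  have hcB := Real.cos_pos_of_mem_Ioo (x := B) ⟨by linarith, by linarith⟩
  have hcC := Real.cos_pos_of_mem_Ioo (x := C) ⟨by linarith, by linarith⟩
  have hcp := Real.cos_pos_of_mem_Ioo (x := A + B + C) ⟨by linarith, by linarith⟩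
  have hcm := Real.cos_pos_of_mem_Ioo (x := m) ⟨by linarith, by linarith⟩
  have hc3 := Real.cos_pos_of_mem_Ioo (x := 3 * m) ⟨by linarith, by linarith⟩
  have e : Real.tan (A + B + C) * (Real.tan A * Real.tan B * Real.tan C) =
      Real.tan (3 * m) * Real.tan m ^ 3 := by
    simp only [Real.tan_eq_sin_div_cos]
    field_simp
    linarith
  have t0 : 0 ≤ Real.tan (A + B + C) :=
    Real.tan_nonneg_of_nonneg_of_le_pi_div_two (by linarith) (by linarith)
  have t1 : 0 ≤ Real.tan ((A + B + C) / 3) :=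
    Real.tan_nonneg_of_nonneg_of_le_pi_div_two (by linarith) (by linarith)
  have s0 : Real.tan (A + B + C) < Real.tan (3 * m) :=
    Real.strictMonoOn_tan ⟨by linarith, by linarith⟩ ⟨by linarith, by linarith⟩ hcon
  have s1 : Real.tan ((A + B + C) / 3) < Real.tan m :=
    Real.strictMonoOn_tan ⟨by linarith, by linarith⟩ ⟨by linarith, by linarith⟩ (by linarith)
  have := mul_le_mul_of_nonneg_left hle t0
  have := mul_lt_mul'' s0 (pow_lt_pow_left₀ s1 t1 three_ne_zero) t0 (by positivity)
  linarith

/-- The denominator in `excess_half` expressed through half sides. -/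
lemma sqrt_prod_eq {a b c : ℝ} (ha : a ∈ Set.Icc 0 Real.pi) (hb : b ∈ Set.Icc 0 Real.pi)
    (hc : c ∈ Set.Icc 0 Real.pi) :
    √(2 * (1 + Real.cos a) * (1 + Real.cos b) * (1 + Real.cos c)) =
      4 * (Real.cos (a / 2) * Real.cos (b / 2) * Real.cos (c / 2)) := by
  have h : ∀ t, 1 + Real.cos t = 2 * Real.cos (t / 2) ^ 2 := fun t => by
    have := Real.cos_sq (t / 2)
    rw [this, mul_div_cancel₀ _ two_ne_zero]; ring
  have h' : ∀ t ∈ Set.Icc 0 Real.pi, 0 ≤ Real.cos (t / 2) := fun t ht =>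
    Real.cos_nonneg_of_neg_pi_div_two_le_of_le (by linarith [ht.1, Real.pi_pos]) (by linarith [ht.2])
  have := h' a ha
  have := h' b hb
  have := h' c hc
  rw [h a, h b, h c, ← Real.sqrt_sq (show 0 ≤ 4 * (Real.cos (a / 2) * Real.cos (b / 2) *
    Real.cos (c / 2)) by positivity)]
  congr 1
  ring

/-- Two triangles with the same cosine `κ` of half the excess, one with side cosines `x, y, z` and
one equilateral with side cosine `w`: the equilateral one has the smaller perimeter. -/
lemma perimeter_le {x y z w κ : ℝ} (hx : x ∈ Set.Icc (-1) 1) (hy : y ∈ Set.Icc (-1) 1)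
    (hz : z ∈ Set.Icc (-1) 1) (hw : -1 / 2 < w) (hw1 : w ≤ 1)
    (t1 : Real.arccos x ≤ Real.arccos y + Real.arccos z)
    (t2 : Real.arccos y ≤ Real.arccos x + Real.arccos z)
    (t3 : Real.arccos z ≤ Real.arccos x + Real.arccos y)
    (h : 1 + x + y + z = √(2 * (1 + x) * (1 + y) * (1 + z)) * κ)
    (h' : 1 + w + w + w = √(2 * (1 + w) * (1 + w) * (1 + w)) * κ) :
    3 * Real.arccos w ≤ Real.arccos x + Real.arccos y + Real.arccos z := by
  have hpi := Real.pi_pos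
  have hreg : Real.arccos w < 2 * Real.pi / 3 := by
    rw [← Real.arccos_cos (x := 2 * Real.pi / 3) (by positivity) (by linarith)]
    apply Real.arccos_lt_arccos _ _ hw1
    · exact Real.neg_one_le_cos _
    · rw [show 2 * Real.pi / 3 = Real.pi - Real.pi / 3 by ring, Real.cos_pi_sub,
        Real.cos_pi_div_three]
      linarith
  -- the equilateral perimeter is below `2π`, so only perimeters below `2π` need an argument
  by_cases hper : 2 * Real.pi ≤ Real.arccos x + Real.arccos y + Real.arccos z
  · linarith
  push Not at hper
  have ia : Real.arccos x ∈ Set.Icc 0 Real.pi := ⟨Real.arccos_nonneg _, Real.arccos_le_pi _⟩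
  have ib : Real.arccos y ∈ Set.Icc 0 Real.pi := ⟨Real.arccos_nonneg _, Real.arccos_le_pi _⟩
  have ic : Real.arccos z ∈ Set.Icc 0 Real.pi := ⟨Real.arccos_nonneg _, Real.arccos_le_pi _⟩
  have iw : Real.arccos w ∈ Set.Icc 0 Real.pi := ⟨Real.arccos_nonneg _, Real.arccos_le_pi _⟩
  have ea := Real.cos_arccos hx.1 hx.2
  have eb := Real.cos_arccos hy.1 hy.2
  have ec := Real.cos_arccos hz.1 hz.2
  have ew := Real.cos_arccos (x := w) (by linarith) hw1
  set a := Real.arccos x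
  set b := Real.arccos y
  set c := Real.arccos z
  set d := Real.arccos w
  rw [← ea, ← eb, ← ec, sqrt_prod_eq ia ib ic] at h
  rw [← ew, sqrt_prod_eq iw iw iw] at h'
  -- in Lhuilier's identities the product of cosines of half sides has the coefficient `1 + κ` in
  -- the first and `1 - κ` in the second; `κ` cancels between the two triangles
  obtain ⟨p1, p2⟩ := @half_angle_identities ((b + c - a) / 4) ((a + c - b) / 4) ((a + b - c) / 4)
  obtain ⟨q1, q2⟩ := @half_angle_identities (d / 4) (d / 4) (d / 4)
  have r1 : (a + c - b) / 4 + (a + b - c) / 4 = a / 2 := by ring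
  have r2 : (b + c - a) / 4 + (a + b - c) / 4 = b / 2 := by ring
  have r3 : (b + c - a) / 4 + (a + c - b) / 4 = c / 2 := by ring
  have r4 : d / 4 + d / 4 = d / 2 := by ring
  rw [r1, r2, r3] at p1 p2
  simp only [mul_div_cancel₀ _ (two_ne_zero (α := ℝ))] at p1 p2
  rw [r4] at q1 q2
  rw [mul_div_cancel₀ _ (two_ne_zero (α := ℝ))] at q1 q2
  have s1 : (b + c - a) / 4 + (a + c - b) / 4 + (a + b - c) / 4 = (a + b + c) / 4 := by ring
  rw [r3] at s1
  have := key_ineq (A := (b + c - a) / 4) (B := (a + c - b) / 4) (C := (a + b - c) / 4)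
    (m := d / 4) (by linarith) (by linarith) (by linarith) (by linarith) (by linarith) (by
      rw [r3, r4]
      rw [h] at p1 p2
      rw [h'] at q1 q2
      have e : _ * _ = _ * _ := congrArg₂ (· * ·) p2 q1
      have e' : _ * _ = _ * _ := congrArg₂ (· * ·) q2 p1
      linear_combination (e' - e) / 64)
  linarith

/-! ### Triangular cones and their facet normals -/

/-- An inward normal of the facet spanned by `b` and `c` of the cone over the unit vectors
`a, b, c`: the component of `a` orthogonal to `b` and `c`, scaled by `1 - ⟪b, c⟫ ^ 2`. It is
orthogonal to `b` and `c` and has inner product `gramDet` with `a`. -/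
noncomputable def facetNormal (a b c : E3) : E3 :=
  (1 - ⟪b, c⟫ ^ 2) • a + (⟪a, c⟫ * ⟪b, c⟫ - ⟪a, b⟫) • b + (⟪a, b⟫ * ⟪b, c⟫ - ⟪a, c⟫) • c

lemma inner_facetNormal (a b c v : E3) : ⟪facetNormal a b c, v⟫ =
    (1 - ⟪b, c⟫ ^ 2) * ⟪a, v⟫ + (⟪a, c⟫ * ⟪b, c⟫ - ⟪a, b⟫) * ⟪b, v⟫ +
      (⟪a, b⟫ * ⟪b, c⟫ - ⟪a, c⟫) * ⟪c, v⟫ := by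
  simp only [facetNormal, inner_add_left, real_inner_smul_left]

lemma real_inner_self_of_norm_one {v : E3} (hv : ‖v‖ = 1) : ⟪v, v⟫ = (1 : ℝ) := by
  rw [real_inner_self_eq_norm_sq, hv]; norm_num

section Triangle
variable {a b c : E3}

lemma facetNormal_inner_self_vertex (ha : ‖a‖ = 1) :
    ⟪facetNormal a b c, a⟫ = gramDet ⟪a, b⟫ ⟪a, c⟫ ⟪b, c⟫ := by
  rw [inner_facetNormal, real_inner_self_of_norm_one ha, real_inner_comm a b, real_inner_comm a c]
  unfold gramDet; ring

lemma facetNormal_inner_left (hb : ‖b‖ = 1) : ⟪facetNormal a b c, b⟫ = 0 := by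
  rw [inner_facetNormal, real_inner_self_of_norm_one hb, real_inner_comm b c]; ring

lemma facetNormal_inner_right (hc : ‖c‖ = 1) : ⟪facetNormal a b c, c⟫ = 0 := by
  rw [inner_facetNormal, real_inner_self_of_norm_one hc]; ring

lemma facetNormal_swap : facetNormal a b c = facetNormal a c b := by
  unfold facetNormal
  rw [real_inner_comm b c]
  module

lemma facetNormal_norm_sq (ha : ‖a‖ = 1) (hb : ‖b‖ = 1) (hc : ‖c‖ = 1) :
    ‖facetNormal a b c‖ ^ 2 = (1 - ⟪b, c⟫ ^ 2) * gramDet ⟪a, b⟫ ⟪a, c⟫ ⟪b, c⟫ := by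
  rw [← real_inner_self_eq_norm_sq]
  conv_lhs => rw [inner_facetNormal]
  rw [real_inner_comm (facetNormal a b c) a, real_inner_comm (facetNormal a b c) b,
    real_inner_comm (facetNormal a b c) c, facetNormal_inner_self_vertex ha,
    facetNormal_inner_left hb, facetNormal_inner_right hc]
  ring

lemma facetNormal_inner_facetNormal (ha : ‖a‖ = 1) (hb : ‖b‖ = 1) (hc : ‖c‖ = 1) :
    ⟪facetNormal a b c, facetNormal b a c⟫ =
      -(⟪a, b⟫ - ⟪a, c⟫ * ⟪b, c⟫) * gramDet ⟪a, b⟫ ⟪a, c⟫ ⟪b, c⟫ := by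
  rw [real_inner_comm, inner_facetNormal, real_inner_comm (facetNormal a b c) a,
    real_inner_comm (facetNormal a b c) b,
    real_inner_comm (facetNormal a b c) c, facetNormal_inner_self_vertex ha, facetNormal_inner_left hb,
    facetNormal_inner_right hc, real_inner_comm a b]
  ring

/-- The dihedral angle of the cone along `c` is `dih`, the angle opposite to the side `a b`. -/
lemma facetNormal_inner_eq_cos_dih (ha : ‖a‖ = 1) (hb : ‖b‖ = 1) (hc : ‖c‖ = 1)
    (hac : 0 < 1 - ⟪a, c⟫ ^ 2) (hbc : 0 < 1 - ⟪b, c⟫ ^ 2)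
    (hG : 0 < gramDet ⟪a, b⟫ ⟪a, c⟫ ⟪b, c⟫) :
    ⟪facetNormal a b c, facetNormal b a c⟫ = -Real.cos (dih ⟪a, b⟫ ⟪a, c⟫ ⟪b, c⟫) *
      (‖facetNormal a b c‖ * ‖facetNormal b a c‖) := by
  have n1 : ‖facetNormal a b c‖ = √(1 - ⟪b, c⟫ ^ 2) * √(gramDet ⟪a, b⟫ ⟪a, c⟫ ⟪b, c⟫) := by
    rw [← Real.sqrt_mul hbc.le, ← facetNormal_norm_sq ha hb hc, Real.sqrt_sq (norm_nonneg _)]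
  have n2 : ‖facetNormal b a c‖ = √(1 - ⟪a, c⟫ ^ 2) * √(gramDet ⟪a, b⟫ ⟪a, c⟫ ⟪b, c⟫) := by
    have : gramDet ⟪a, b⟫ ⟪a, c⟫ ⟪b, c⟫ = gramDet ⟪b, a⟫ ⟪b, c⟫ ⟪a, c⟫ := by
      rw [real_inner_comm a b]; unfold gramDet; ring
    rw [this, ← Real.sqrt_mul hac.le, ← facetNormal_norm_sq hb ha hc,
      Real.sqrt_sq (norm_nonneg _)]
  rw [facetNormal_inner_facetNormal ha hb hc, (dih_spec hac hbc hG).2.1, n1, n2]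
  have h1 := Real.sqrt_pos.mpr hac
  have h2 := Real.sqrt_pos.mpr hbc
  have h3 := Real.mul_self_sqrt hG.le
  field_simp
  linear_combination (⟪a, b⟫ - ⟪a, c⟫ * ⟪b, c⟫) * h3

lemma one_sub_sq_nonneg (ha : ‖a‖ = 1) (hb : ‖b‖ = 1) : 0 ≤ 1 - ⟪a, b⟫ ^ 2 := by
  have := abs_real_inner_le_norm a b
  rw [ha, hb, mul_one, ← sq_le_one_iff_abs_le_one] at this
  linarith

lemma one_sub_sq_pos (ha : ‖a‖ = 1) (hb : ‖b‖ = 1)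
    (hG : 0 < gramDet ⟪a, b⟫ ⟪a, c⟫ ⟪b, c⟫) : 0 < 1 - ⟪a, b⟫ ^ 2 := by
  refine lt_of_le_of_ne (one_sub_sq_nonneg ha hb) fun h => ?_
  have : gramDet ⟪a, b⟫ ⟪a, c⟫ ⟪b, c⟫ = (1 - ⟪a, b⟫ ^ 2) * (1 - ⟪a, c⟫ ^ 2) -
      (⟪b, c⟫ - ⟪a, b⟫ * ⟪a, c⟫) ^ 2 := by unfold gramDet; ring
  rw [← h, zero_mul] at this
  linarith [sq_nonneg (⟪b, c⟫ - ⟪a, b⟫ * ⟪a, c⟫)]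

end Triangle

/-- Up to the factor `gramDet`, the facet normals read off the coordinates with respect to `u`. -/
lemma inner_facetNormal_sum {u : Fin 3 → E3} (hu : ∀ i, ‖u i‖ = 1) (k : Fin 3 → ℝ) :
    ⟪facetNormal (u 0) (u 1) (u 2), ∑ i, k i • u i⟫ =
      k 0 * gramDet ⟪u 0, u 1⟫ ⟪u 0, u 2⟫ ⟪u 1, u 2⟫ ∧
    ⟪facetNormal (u 1) (u 0) (u 2), ∑ i, k i • u i⟫ =
      k 1 * gramDet ⟪u 0, u 1⟫ ⟪u 0, u 2⟫ ⟪u 1, u 2⟫ ∧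
    ⟪facetNormal (u 2) (u 0) (u 1), ∑ i, k i • u i⟫ =
      k 2 * gramDet ⟪u 0, u 1⟫ ⟪u 0, u 2⟫ ⟪u 1, u 2⟫ := by
  simp only [Fin.sum_univ_three, inner_add_right, real_inner_smul_right,
    facetNormal_inner_self_vertex (hu _), facetNormal_inner_left (hu _),
    facetNormal_inner_right (hu _)]
  rw [real_inner_comm (u 0) (u 1), real_inner_comm (u 0) (u 2), real_inner_comm (u 1) (u 2)]
  unfold gramDet
  refine ⟨?_, ?_, ?_⟩ <;> ring

lemma linearIndependent_of_gramDet_pos {u : Fin 3 → E3} (hu : ∀ i, ‖u i‖ = 1)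
    (hG : 0 < gramDet ⟪u 0, u 1⟫ ⟪u 0, u 2⟫ ⟪u 1, u 2⟫) : LinearIndependent ℝ u := by
  rw [Fintype.linearIndependent_iff]
  intro k hk
  obtain ⟨h0, h1, h2⟩ := inner_facetNormal_sum hu k
  rw [hk, inner_zero_right, zero_eq_mul, or_iff_left hG.ne'] at h0 h1 h2
  intro i
  fin_cases i
  exacts [h0, h1, h2]

lemma gramDet_pos {u : Fin 3 → E3} (hu : ∀ i, ‖u i‖ = 1) (hli : LinearIndependent ℝ u) :
    0 < gramDet ⟪u 0, u 1⟫ ⟪u 0, u 2⟫ ⟪u 1, u 2⟫ := by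
  rw [Fintype.linearIndependent_iff] at hli
  have hz : 1 - ⟪u 1, u 2⟫ ^ 2 ≠ 0 := by
    intro h
    have h0 : ‖u 1 - ⟪u 1, u 2⟫ • u 2‖ ^ 2 = 1 - ⟪u 1, u 2⟫ ^ 2 := by
      rw [← real_inner_self_eq_norm_sq]
      simp only [inner_sub_left, inner_sub_right, real_inner_smul_left, real_inner_smul_right,
        real_inner_self_of_norm_one (hu _), real_inner_comm (u 1) (u 2)]
      ring
    rw [h, sq_eq_zero_iff, norm_eq_zero] at h0
    have := hli ![0, 1, -⟪u 1, u 2⟫] (by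
      rw [← h0]; simp [Fin.sum_univ_three, sub_eq_add_neg]) 1
    simp at this
  have hn : facetNormal (u 0) (u 1) (u 2) ≠ 0 := by
    intro h
    exact hz (hli ![1 - ⟪u 1, u 2⟫ ^ 2, ⟪u 0, u 2⟫ * ⟪u 1, u 2⟫ - ⟪u 0, u 1⟫,
      ⟪u 0, u 1⟫ * ⟪u 1, u 2⟫ - ⟪u 0, u 2⟫] (by
        rw [← h]; simp [Fin.sum_univ_three, facetNormal]) 0)
  have h1 := facetNormal_norm_sq (hu 0) (hu 1) (hu 2)
  have h2 : 0 < ‖facetNormal (u 0) (u 1) (u 2)‖ ^ 2 := by positivity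
  rw [h1] at h2
  exact (pos_iff_pos_of_mul_pos h2).mp (lt_of_le_of_ne (one_sub_sq_nonneg (hu 1) (hu 2)) hz.symm)

/-- The cone over three independent vectors is the intersection of its facet half-spaces. -/
lemma coneGen_eq {u : Fin 3 → E3} (hu : ∀ i, ‖u i‖ = 1)
    (hG : 0 < gramDet ⟪u 0, u 1⟫ ⟪u 0, u 2⟫ ⟪u 1, u 2⟫) :
    coneGen u = halfSp (facetNormal (u 0) (u 1) (u 2)) ∩ halfSp (facetNormal (u 1) (u 0) (u 2)) ∩
      halfSp (facetNormal (u 2) (u 0) (u 1)) := by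
  have hli := linearIndependent_of_gramDet_pos hu hG
  ext x
  let b := basisOfLinearIndependentOfCardEqFinrank hli (by simp)
  have hx : x = ∑ i, b.repr x i • u i := by
    conv_lhs => rw [← b.sum_repr x]
    simp [b]
  constructor
  · rintro ⟨k, hk, rfl⟩
    obtain ⟨h0, h1, h2⟩ := inner_facetNormal_sum hu k
    refine ⟨⟨?_, ?_⟩, ?_⟩
    · exact (mul_nonneg (hk 0) hG.le).trans_eq h0.symm
    · exact (mul_nonneg (hk 1) hG.le).trans_eq h1.symm
    · exact (mul_nonneg (hk 2) hG.le).trans_eq h2.symm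
  · rintro ⟨⟨m0, m1⟩, m2⟩
    refine ⟨fun i => b.repr x i, ?_, hx⟩
    obtain ⟨h0, h1, h2⟩ := inner_facetNormal_sum hu (fun i => b.repr x i)
    rw [← hx] at h0 h1 h2
    simp only [halfSp, Set.mem_ofPred_eq, h0, h1, h2, mul_nonneg_iff_of_pos_right hG] at m0 m1 m2
    intro i
    fin_cases i
    exacts [m0, m1, m2]

/-- The area of a spherical triangle, as a fraction of the sphere, determines this relation between
the cosines of its sides: Girard's formula identifies the excess, and `excess_half` applies. -/
lemma cos_half_excess {u : Fin 3 → E3} (hu : ∀ i, ‖u i‖ = 1)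
    (hG : 0 < gramDet ⟪u 0, u 1⟫ ⟪u 0, u 2⟫ ⟪u 1, u 2⟫) :
    1 + ⟪u 0, u 1⟫ + ⟪u 0, u 2⟫ + ⟪u 1, u 2⟫ =
      √(2 * (1 + ⟪u 0, u 1⟫) * (1 + ⟪u 0, u 2⟫) * (1 + ⟪u 1, u 2⟫)) *
        Real.cos (sphM.real (coneGen u) * (4 * Real.pi) / sphM.real Set.univ / 2) := by
  have hM : 0 < sphM.real Set.univ := ENNReal.toReal_pos sphM_univ_pos.ne' (measure_ne_top _ _)
  have c01 := real_inner_comm (u 0) (u 1)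
  have c02 := real_inner_comm (u 0) (u 2)
  have c12 := real_inner_comm (u 1) (u 2)
  have g2 : gramDet ⟪u 0, u 2⟫ ⟪u 0, u 1⟫ ⟪u 1, u 2⟫ = gramDet ⟪u 0, u 1⟫ ⟪u 0, u 2⟫ ⟪u 1, u 2⟫ := by
    unfold gramDet; ring
  have g3 : gramDet ⟪u 1, u 2⟫ ⟪u 0, u 1⟫ ⟪u 0, u 2⟫ = gramDet ⟪u 0, u 1⟫ ⟪u 0, u 2⟫ ⟪u 1, u 2⟫ := by
    unfold gramDet; ring
  have hx : 0 < 1 - ⟪u 0, u 1⟫ ^ 2 := one_sub_sq_pos (hu 0) (hu 1) hG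
  have hy : 0 < 1 - ⟪u 0, u 2⟫ ^ 2 := one_sub_sq_pos (b := u 2) (c := u 1) (hu 0) (hu 2) (by
    rw [c12, g2]; exact hG)
  have hz : 0 < 1 - ⟪u 1, u 2⟫ ^ 2 := one_sub_sq_pos (b := u 2) (c := u 0) (hu 1) (hu 2) (by
    rw [c01, c02, g3]; exact hG)
  have hn : ∀ i j k : E3, ‖i‖ = 1 → gramDet ⟪i, j⟫ ⟪i, k⟫ ⟪j, k⟫ > 0 → facetNormal i j k ≠ 0 := by
    intro i j k hi h h0
    have := facetNormal_inner_self_vertex (b := j) (c := k) hi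
    rw [h0, inner_zero_left] at this
    linarith
  have h01 := facetNormal_inner_eq_cos_dih (hu 0) (hu 1) (hu 2) hy hz hG
  have h02 := facetNormal_inner_eq_cos_dih (hu 0) (hu 2) (hu 1) hx (by rwa [c12])
    (by rw [c12, g2]; exact hG)
  have h12 := facetNormal_inner_eq_cos_dih (hu 1) (hu 2) (hu 0) (by rwa [c01]) (by rwa [c02])
    (by rw [c01, c02, g3]; exact hG)
  rw [facetNormal_swap (a := u 0) (b := u 2), c12] at h02
  rw [facetNormal_swap (a := u 1) (b := u 2), facetNormal_swap (a := u 2) (b := u 1), c01, c02]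
    at h12
  have hgir := girard
    (hn _ _ _ (hu 0) hG)
    (hn (u 1) (u 0) (u 2) (hu 1) (by
      rw [c01, gt_iff_lt]; convert hG using 1; unfold gramDet; ring))
    (hn (u 2) (u 0) (u 1) (hu 2) (by
      rw [c02, c12, gt_iff_lt]; convert hG using 1; unfold gramDet; ring))
    (dih_spec hy hz hG).1 (dih_spec hx hz (by rw [g2]; exact hG)).1
    (dih_spec hx hy (by rw [g3]; exact hG)).1 h01 h02 h12
  rw [← coneGen_eq hu hG] at hgir
  have hE : dih ⟪u 0, u 1⟫ ⟪u 0, u 2⟫ ⟪u 1, u 2⟫ + dih ⟪u 0, u 2⟫ ⟪u 0, u 1⟫ ⟪u 1, u 2⟫ +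
      dih ⟪u 1, u 2⟫ ⟪u 0, u 1⟫ ⟪u 0, u 2⟫ - Real.pi =
      sphM.real (coneGen u) * (4 * Real.pi) / sphM.real Set.univ := by
    rw [hgir]; field_simp
  rw [← hE]
  exact excess_half hx hy hz hG (by rw [hE]; positivity)

/-! ### The regular triangle and the conclusion -/

lemma cos_two_pi_thirds : Real.cos (2 * Real.pi / 3) = -1 / 2 := by
  rw [show 2 * Real.pi / 3 = Real.pi - Real.pi / 3 by ring, Real.cos_pi_sub,
    Real.cos_pi_div_three]; ring

lemma sin_two_pi_thirds : Real.sin (2 * Real.pi / 3) = √3 / 2 := by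
  rw [show 2 * Real.pi / 3 = Real.pi - Real.pi / 3 by ring, Real.sin_pi_sub,
    Real.sin_pi_div_three]

lemma cos_four_pi_thirds : Real.cos (2 * Real.pi * 2 / 3) = -1 / 2 := by
  rw [show 2 * Real.pi * 2 / 3 = Real.pi / 3 + Real.pi by ring, Real.cos_add_pi,
    Real.cos_pi_div_three]; ring

lemma sin_four_pi_thirds : Real.sin (2 * Real.pi * 2 / 3) = -(√3 / 2) := by
  rw [show 2 * Real.pi * 2 / 3 = Real.pi / 3 + Real.pi by ring, Real.sin_add_pi,
    Real.sin_pi_div_three]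

lemma regVec_inner (θ : ℝ) :
    ⟪regVec 3 θ 0, regVec 3 θ 1⟫ = 1 - 3 / 2 * Real.sin θ ^ 2 ∧
    ⟪regVec 3 θ 0, regVec 3 θ 2⟫ = 1 - 3 / 2 * Real.sin θ ^ 2 ∧
    ⟪regVec 3 θ 1, regVec 3 θ 2⟫ = 1 - 3 / 2 * Real.sin θ ^ 2 := by
  have h3 := Real.mul_self_sqrt (show (0 : ℝ) ≤ 3 by norm_num)
  have hs := Real.sin_sq_add_cos_sq θ
  refine ⟨?_, ?_, ?_⟩ <;>
  simp [regVec, PiLp.inner_apply, Fin.sum_univ_three, cos_two_pi_thirds, sin_two_pi_thirds,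
    cos_four_pi_thirds, sin_four_pi_thirds]
  · linear_combination hs
  · linear_combination hs
  · linear_combination hs - 1 / 4 * Real.sin θ ^ 2 * h3

lemma regVec_norm (θ : ℝ) (k : ℕ) : ‖regVec 3 θ k‖ = 1 := by
  rw [EuclideanSpace.norm_eq, Real.sqrt_eq_one]
  simp [regVec, Fin.sum_univ_three]
  linear_combination Real.sin_sq_add_cos_sq θ +
    Real.sin θ ^ 2 * Real.sin_sq_add_cos_sq (2 * Real.pi * k / 3)

/-- Isoperimetric inequality for spherical triangles: among spherical triangles of a given
area, the regular spherical triangle minimizes the perimeter. -/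
theorem spherical_triangle_isoperimetric
    (u : Fin 3 → EuclideanSpace ℝ (Fin 3))
    (hli : LinearIndependent ℝ u) (hunit : ∀ i, ‖u i‖ = 1)
    (θ : ℝ) (hθ : θ ∈ Set.Ioo 0 (Real.pi / 2))
    (harea : μH[2] (coneGen u ∩ Metric.sphere (0 : EuclideanSpace ℝ (Fin 3)) 1) =
      μH[2] ((coneGen fun k : Fin 3 => regVec 3 θ k) ∩
        Metric.sphere (0 : EuclideanSpace ℝ (Fin 3)) 1)) :
    3 * Real.arccos ⟪regVec 3 θ 0, regVec 3 θ 1⟫ ≤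
      Real.arccos ⟪u 0, u 1⟫ + Real.arccos ⟪u 1, u 2⟫ + Real.arccos ⟪u 2, u 0⟫ := by
  have hs0 : 0 < Real.sin θ :=
    Real.sin_pos_of_pos_of_lt_pi hθ.1 (by linarith [hθ.2, Real.pi_pos])
  have hc0 : 0 < Real.cos θ := Real.cos_pos_of_mem_Ioo ⟨by linarith [hθ.1, Real.pi_pos], hθ.2⟩
  have hsc := Real.sin_sq_add_cos_sq θ
  obtain ⟨w01, w02, w12⟩ := regVec_inner θ
  set w : ℝ := 1 - 3 / 2 * Real.sin θ ^ 2 with hw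
  have hw1 : w < 1 := by rw [hw]; nlinarith
  have hw2 : -1 / 2 < w := by rw [hw]; nlinarith
  have hGu := gramDet_pos hunit hli
  have e1 := cos_half_excess hunit hGu
  have e2 := cos_half_excess (u := fun k : Fin 3 => regVec 3 θ k) (fun i => regVec_norm θ i) (by
    change 0 < gramDet ⟪regVec 3 θ 0, regVec 3 θ 1⟫ ⟪regVec 3 θ 0, regVec 3 θ 2⟫
      ⟪regVec 3 θ 1, regVec 3 θ 2⟫
    rw [w01, w02, w12]
    have : gramDet w w w = (1 - w) ^ 2 * (1 + 2 * w) := by unfold gramDet; ring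
    rw [this]
    have : 0 < 1 - w := by linarith
    have : 0 < 1 + 2 * w := by linarith
    positivity)
  change 1 + ⟪regVec 3 θ 0, regVec 3 θ 1⟫ + ⟪regVec 3 θ 0, regVec 3 θ 2⟫ +
    ⟪regVec 3 θ 1, regVec 3 θ 2⟫ = √(2 * (1 + ⟪regVec 3 θ 0, regVec 3 θ 1⟫) *
      (1 + ⟪regVec 3 θ 0, regVec 3 θ 2⟫) * (1 + ⟪regVec 3 θ 1, regVec 3 θ 2⟫)) * _ at e2
  rw [w01, w02, w12] at e2
  -- equal areas make the two cosines of half the excess equal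
  have harea' : sphM.real (coneGen u) = sphM.real (coneGen fun k : Fin 3 => regVec 3 θ k) := by
    rw [measureReal_def, measureReal_def, sphM_apply, sphM_apply, harea]
  rw [← harea'] at e2
  -- the triangle inequality for spherical distances
  have ang : ∀ i j, InnerProductGeometry.angle (u i) (u j) = Real.arccos ⟪u i, u j⟫ := fun i j => by
    rw [InnerProductGeometry.angle, hunit, hunit, mul_one, div_one]
  have bd : ∀ i j, ⟪u i, u j⟫ ∈ Set.Icc (-1 : ℝ) 1 := fun i j =>
    abs_le.mp (by simpa [hunit] using abs_real_inner_le_norm (u i) (u j))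
  have tri := fun i j k => InnerProductGeometry.angle_le_angle_add_angle (u i) (u j) (u k)
  simp only [ang] at tri
  have c01 := real_inner_comm (u 0) (u 1)
  have c02 := real_inner_comm (u 0) (u 2)
  have c12 := real_inner_comm (u 1) (u 2)
  have t1 := tri 0 2 1
  have t2 := tri 0 1 2
  have t3 := tri 1 0 2
  rw [c12] at t1
  rw [c01] at t3
  have := perimeter_le (bd 0 1) (bd 0 2) (bd 1 2) hw2 hw1.le t1 t2 t3 e1 e2
  rw [w01, c02]
  linarith
end
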